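/- arXiv:2503.03899 — 7 statements merged into one kernel-verified Lean document; each statement's English description precedes it below -/
import Mathlib

section
/- Fix δ with 0 < δ < 1/4. Then the limit as n → ∞ of P_n({λ ∈ D_n : sup_{t ≥ 0} |(1/√n)·Σ_{k ≤ t√n} X_k(λ) − L(t)| ≤ n^{−1/4+δ}}) equals 1. -/
/-!
The proof compares the uniform measure on `D_n` with the Boltzmann model, in which the parts `k`
are present independently with probability `q^k / (1 + q^k)`, where `q = e^{-a/√n}` and
`a = π/√12 = 1/A`. The uniform measure is the Boltzmann model conditioned on the sum of the parts
being `n`, so an event of probability `ε` in the model has uniform probability at most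
`ε Z(q) q^{-n} / d(n)` with `Z(q) = ∏ (1 + q^k)`. Deviations of the counting function by
`n^{1/4 + δ}` have model probability about `exp(-n^δ)`, so it suffices to bound the factor
`Z(q) q^{-n} / d(n)` by a power of `n`.

* `prod_one_add_le`: `log Z(e^{-s}) ≤ π²/(12 s)`, hence `Z(q) q^{-n} ≤ e^{2a√n}`. By Euler's
  product identity `log Z = ∑_m (1/m) ∑_{v odd} e^{-smv}`, and the inner sum is
  `1/(2 sinh (sm)) ≤ 1/(2sm)`.
* `d_lower`: `d(n) ≥ c e^{2a√n} / (n+1)^268`. By Euler's theorem `d(n)` counts partitions into odd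
  parts, whence `n d(n) ≥ ∑_{k ≥ 1, v odd} v d(n - kv)` (`recurrence`). The minorant
  `f(n) = e^{2a√n} / (n+1)^C` satisfies the reverse inequality for large `n` (`low_recurrence`): by
  Taylor expansion `f(n-j)/f(n)` is at least
  `e^{-aj/√n} (1 + C j/(2n)) (1 - a j²/n^{3/2})`, and `∑ v e^{-skv} = π²/(12 s²) + O(1/s)`
  produces the main term `n`, while the factor `1 + C j/(2n)` gains a multiple of `C √n`, which
  beats all error terms of order `√n` once `C` is large. Induction on `n` finishes.
* `two_sided`: the Chernoff bound for the number of parts of size at most `m`, with parameter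
  `n^{-1/4}`; `bad_card_le` takes the union over `m ≤ n`.
* `profile_close`: the model mean of the number of parts `≤ m` is within `1` of
  `√n L(m/√n)`, and `L` varies little between lattice points and beyond `√n`.
-/

open scoped BigOperators Real
open Filter

/-- The uniform probability (as a real number) that a distinct parts partition of `n`
satisfies the predicate `p`. -/
noncomputable def Pn (n : ℕ) (p : Nat.Partition n → Prop) : ℝ :=
  letI := Classical.decPred p
  (((Nat.Partition.distincts n).filter p).card : ℝ) / ((Nat.Partition.distincts n).card : ℝ)

/-- `X k lam` is the multiplicity of the part `k` in the partition `lam`. -/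
def X {n : ℕ} (lam : Nat.Partition n) (k : ℕ) : ℕ := Multiset.count k lam.parts

/-- The constant `A = √12/π`. -/
noncomputable def A : ℝ := Real.sqrt 12 / π

/-- The limit shape `L(t) = A log(2/(1+e^{−t/A}))` of distinct parts partitions. -/
noncomputable def L (t : ℝ) : ℝ := A * Real.log (2 / (1 + Real.exp (-t / A)))

namespace LimitShape

/-! ### Partition counting -/

/-- The number of distinct parts partitions of `n`. -/
def d (n : ℕ) : ℕ := (Nat.Partition.distincts n).card

lemma d_eq_odds (n : ℕ) : d n = (Nat.Partition.odds n).card :=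
  (Nat.Partition.card_odds_eq_card_distincts n).symm

/-- The partition of `n` obtained from a partition of `n - k * v` by adjoining `k` parts `v`. -/
def addCopies {n : ℕ} (k v : ℕ) (hv : 0 < v) (h : k * v ≤ n) (μ : Nat.Partition (n - k * v)) :
    Nat.Partition n where
  parts := μ.parts + Multiset.replicate k v
  parts_pos := by
    intro i hi
    rcases Multiset.mem_add.1 hi with h1 | h1
    · exact μ.parts_pos h1
    · rw [Multiset.eq_of_mem_replicate h1]; exact hv
  parts_sum := by
    rw [Multiset.sum_add, μ.parts_sum, Multiset.sum_replicate, smul_eq_mul]; omega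

/-- Adjoining `k` copies of the odd part `v = 2i + 1` embeds the partitions of `n - kv` into odd parts
into those of `n` having at least `k` parts `v`. -/
lemma card_count_ge (n k i : ℕ) (h : k * (2 * i + 1) ≤ n) :
    d (n - k * (2 * i + 1)) ≤
      ((Nat.Partition.odds n).filter (fun l => k ≤ l.parts.count (2 * i + 1))).card := by
  rw [d_eq_odds]
  refine Finset.card_le_card_of_injOn (addCopies k (2 * i + 1) (by omega) h) ?_ ?_
  · intro μ hμ
    simp only [Nat.Partition.odds, Nat.Partition.restricted, Finset.coe_filter, Finset.mem_univ, true_and,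
      Set.mem_ofPred_eq, Finset.mem_filter] at hμ ⊢
    constructor
    · intro j hj
      rcases Multiset.mem_add.1 hj with h1 | h1
      · exact hμ j h1
      · rw [Multiset.eq_of_mem_replicate h1]; simp
    · simp [addCopies, Multiset.count_add]
  · intro μ _ ν _ e
    have := congrArg Nat.Partition.parts e
    simp only [addCopies, add_left_inj] at this
    exact Nat.Partition.ext this

lemma sum_odd_count_le {n : ℕ} (l : Nat.Partition n) (N : ℕ) :
    ∑ i ∈ Finset.range N, (2 * i + 1) * l.parts.count (2 * i + 1) ≤ n := by
  set s := l.parts.toFinset ∪ (Finset.range N).image (fun i => 2 * i + 1) with hs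
  have h1 : l.parts.sum = ∑ m ∈ s, l.parts.count m • m :=
    Finset.sum_multiset_count_of_subset _ _ Finset.subset_union_left
  rw [l.parts_sum] at h1
  calc ∑ i ∈ Finset.range N, (2 * i + 1) * l.parts.count (2 * i + 1)
      = ∑ m ∈ (Finset.range N).image (fun i => 2 * i + 1), l.parts.count m • m := by
        rw [Finset.sum_image (by intro a _ b _ h; simpa using h)]
        simp [mul_comm]
    _ ≤ ∑ m ∈ s, l.parts.count m • m :=
        Finset.sum_le_sum_of_subset Finset.subset_union_right
    _ = n := h1.symm

/-- Pairs `(k, i)` with `(k + 1) * (2 * i + 1) ≤ n`. -/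
def pairs (n : ℕ) : Finset (ℕ × ℕ) :=
  (Finset.range n ×ˢ Finset.range n).filter (fun p => (p.1 + 1) * (2 * p.2 + 1) ≤ n)

lemma mem_pairs {n : ℕ} {p : ℕ × ℕ} : p ∈ pairs n ↔ (p.1 + 1) * (2 * p.2 + 1) ≤ n := by
  simp only [pairs, Finset.mem_filter, Finset.mem_product, Finset.mem_range, and_iff_right_iff_imp]
  intro h
  constructor <;> nlinarith [Nat.zero_le (p.1 * p.2)]

/-- Summing `n = ∑ v · (multiplicity of v)` over all partitions of `n` into odd parts, with the
multiplicity written as the number of `k ≥ 1` not exceeding it, gives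
`n d(n) ≥ ∑_{k, v} v d(n - kv)`. -/
lemma recurrence (n : ℕ) :
    ∑ p ∈ pairs n, (2 * p.2 + 1) * d (n - (p.1 + 1) * (2 * p.2 + 1)) ≤ n * d n := by
  calc ∑ p ∈ pairs n, (2 * p.2 + 1) * d (n - (p.1 + 1) * (2 * p.2 + 1))
      ≤ ∑ p ∈ pairs n, (2 * p.2 + 1) * ((Nat.Partition.odds n).filter
          (fun l => p.1 + 1 ≤ l.parts.count (2 * p.2 + 1))).card :=
        Finset.sum_le_sum fun p hp => Nat.mul_le_mul_left _ (card_count_ge _ _ _ (mem_pairs.1 hp))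
    _ ≤ ∑ p ∈ Finset.range n ×ˢ Finset.range n, (2 * p.2 + 1) * ((Nat.Partition.odds n).filter
          (fun l => p.1 + 1 ≤ l.parts.count (2 * p.2 + 1))).card :=
        Finset.sum_le_sum_of_subset (Finset.filter_subset _ _)
    _ = ∑ l ∈ Nat.Partition.odds n, ∑ i ∈ Finset.range n, (2 * i + 1) *
          ((Finset.range n).filter (fun k => k + 1 ≤ l.parts.count (2 * i + 1))).card := by
        rw [Finset.sum_product_right]
        conv_rhs => rw [Finset.sum_comm]
        refine Finset.sum_congr rfl fun i _ => ?_
        dsimp only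
        rw [← Finset.mul_sum, ← Finset.mul_sum]
        congr 1
        simp only [Finset.card_filter]
        rw [Finset.sum_comm]
    _ ≤ ∑ l ∈ Nat.Partition.odds n, ∑ i ∈ Finset.range n, (2 * i + 1) *
          l.parts.count (2 * i + 1) := by
        refine Finset.sum_le_sum fun l _ => Finset.sum_le_sum fun i _ => Nat.mul_le_mul_left _ ?_
        calc _ ≤ (Finset.range (l.parts.count (2 * i + 1))).card :=
              Finset.card_le_card fun k hk => by simp at hk ⊢; omega
          _ = _ := Finset.card_range _
    _ ≤ ∑ l ∈ Nat.Partition.odds n, n :=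
        Finset.sum_le_sum fun l _ => sum_odd_count_le l n
    _ = n * d n := by rw [Finset.sum_const, d_eq_odds, smul_eq_mul, mul_comm]

lemma d_pos (n : ℕ) : 0 < d n := by
  have := card_count_ge n n 0 (by simp)
  have h0 : d 0 = 1 := by decide
  rw [d_eq_odds]
  simp only [mul_zero, zero_add, mul_one, Nat.sub_self, h0] at this
  exact this.trans (Finset.card_filter_le _ _)

/-- The sum over `D_n` of a multiplicative weight is at most the full product: expanding the
product gives one term for each set of distinct parts in `[1, n]`. -/
lemma sum_weights_le (n : ℕ) (w : ℕ → ℝ) (hw : ∀ k, 0 ≤ w k) :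
    ∑ l ∈ Nat.Partition.distincts n, (l.parts.map w).prod ≤ ∏ k ∈ Finset.Icc 1 n, (1 + w k) := by
  classical
  rw [Finset.prod_one_add]
  have key : ∀ l ∈ Nat.Partition.distincts n, (l.parts.map w).prod = ∏ k ∈ l.parts.toFinset, w k := by
    intro l hl
    have hn : l.parts.Nodup := by simpa [Nat.Partition.distincts] using hl
    rw [Finset.prod_eq_multiset_prod, Multiset.toFinset_val, hn.dedup]
  rw [Finset.sum_congr rfl key]
  have inj : Set.InjOn (fun l : Nat.Partition n => l.parts.toFinset) (Nat.Partition.distincts n) := by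
    intro l hl m hm h
    have h1 : l.parts.Nodup := by simpa [Nat.Partition.distincts] using hl
    have h2 : m.parts.Nodup := by simpa [Nat.Partition.distincts] using hm
    have h3 := congrArg Finset.val h
    simp only [Multiset.toFinset_val, h1.dedup, h2.dedup] at h3
    exact Nat.Partition.ext h3
  rw [← Finset.sum_image (f := fun S => ∏ k ∈ S, w k) inj]
  refine Finset.sum_le_sum_of_subset_of_nonneg ?_ fun S _ _ => Finset.prod_nonneg fun k _ => hw k
  intro S hS
  obtain ⟨l, -, rfl⟩ := Finset.mem_image.1 hS
  rw [Finset.mem_powerset]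
  intro k hk
  rw [Multiset.mem_toFinset] at hk
  rw [Finset.mem_Icc]
  refine ⟨l.parts_pos hk, ?_⟩
  have := Multiset.le_sum_of_mem hk
  rwa [l.parts_sum] at this

/-! ### The sums over `k` and odd `v` -/

lemma cosh_ge_sinh_div {u : ℝ} (hu : 0 ≤ u) : Real.sinh u ≤ u * Real.cosh u := by
  have hd : ∀ x : ℝ, HasDerivAt (fun x => x * Real.cosh x - Real.sinh x) (x * Real.sinh x) x := by
    intro x
    have := ((hasDerivAt_id x).mul (Real.hasDerivAt_cosh x)).sub (Real.hasDerivAt_sinh x)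
    have e : x * Real.sinh x = 1 * Real.cosh x + id x * Real.sinh x - Real.cosh x := by
      simp only [id]; ring
    rw [e]
    exact this
  have hm : MonotoneOn (fun x => x * Real.cosh x - Real.sinh x) (Set.Ici 0) := by
    refine monotoneOn_of_deriv_nonneg (convex_Ici 0)
      (fun x _ => (hd x).continuousAt.continuousWithinAt)
      (fun x _ => (hd x).differentiableAt.differentiableWithinAt) ?_
    intro x hx
    rw [interior_Ici] at hx
    rw [(hd x).deriv]
    exact mul_nonneg hx.le (Real.sinh_nonneg_iff.2 hx.le)
  have := hm (Set.mem_Ici.2 le_rfl) (Set.mem_Ici.2 hu) hu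
  simp at this
  linarith

lemma one_sub_exp_neg_two (u : ℝ) : 1 - Real.exp (-u) ^ 2 = 2 * Real.exp (-u) * Real.sinh u := by
  rw [Real.sinh_eq]
  have : Real.exp (-u) * Real.exp u = 1 := by rw [← Real.exp_add]; simp
  nlinarith

lemma one_add_exp_neg_two (u : ℝ) : 1 + Real.exp (-u) ^ 2 = 2 * Real.exp (-u) * Real.cosh u := by
  rw [Real.cosh_eq]
  have : Real.exp (-u) * Real.exp u = 1 := by rw [← Real.exp_add]; simp
  nlinarith

/-- `∑_{v odd} v e^{-uv}` in closed form. -/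
lemma hasSum_odd {u : ℝ} (hu : 0 < u) :
    HasSum (fun i : ℕ => (2 * i + 1 : ℝ) * Real.exp (-(u * (2 * i + 1))))
      (Real.cosh u / (2 * Real.sinh u ^ 2)) := by
  set x := Real.exp (-u) with hx
  have hx0 : 0 < x := Real.exp_pos _
  have hx1 : x < 1 := by rw [hx, Real.exp_lt_one_iff]; linarith
  have hxx : ‖x ^ 2‖ < 1 := by
    rw [Real.norm_of_nonneg (by positivity)]; nlinarith
  have h1 := (hasSum_coe_mul_geometric_of_norm_lt_one hxx).mul_left (2 * x)
  have h2 := (hasSum_geometric_of_norm_lt_one hxx).mul_left x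
  have hs : 0 < Real.sinh u := Real.sinh_pos_iff.2 hu
  have hf : (fun i : ℕ => (2 * i + 1 : ℝ) * Real.exp (-(u * (2 * i + 1)))) =
      fun i : ℕ => 2 * x * (i * (x ^ 2) ^ i) + x * (x ^ 2) ^ i := by
    funext i
    have : Real.exp (-(u * (2 * i + 1))) = x * (x ^ 2) ^ i := by
      rw [hx, ← Real.exp_nat_mul, ← Real.exp_nat_mul, ← Real.exp_add]
      congr 1; push_cast; ring
    rw [this]; ring
  have hv : Real.cosh u / (2 * Real.sinh u ^ 2) =
      2 * x * (x ^ 2 / (1 - x ^ 2) ^ 2) + x * (1 - x ^ 2)⁻¹ := by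
    have e1 := one_sub_exp_neg_two u
    have e2 := one_add_exp_neg_two u
    rw [← hx] at e1 e2
    have hne : 1 - x ^ 2 ≠ 0 := by nlinarith
    have : 2 * x * (x ^ 2 / (1 - x ^ 2) ^ 2) + x * (1 - x ^ 2)⁻¹
        = x * (1 + x ^ 2) / (1 - x ^ 2) ^ 2 := by field_simp; ring
    rw [this, e1, e2]
    field_simp
  rw [hf, hv]
  exact h1.add h2

lemma odd_le {u : ℝ} (hu : 0 < u) : Real.cosh u / (2 * Real.sinh u ^ 2) ≤ 1 / u ^ 2 := by
  have hs : 0 < Real.sinh u := Real.sinh_pos_iff.2 hu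
  have h2 : u / 2 ≤ Real.sinh (u / 2) := Real.self_le_sinh_iff.2 (by positivity)
  have e1 : Real.cosh u = 1 + 2 * Real.sinh (u / 2) ^ 2 := by
    have := Real.cosh_two_mul (u / 2)
    rw [show 2 * (u / 2) = u by ring] at this
    rw [this, Real.cosh_sq]; ring
  have e2 : Real.cosh u ^ 2 = Real.sinh u ^ 2 + 1 := Real.cosh_sq u
  rw [div_le_div_iff₀ (by positivity) (by positivity)]
  -- with `c = cosh u`, `2 sinh² u = 2 (c - 1) (c + 1)` and `u² ≤ 2 (c - 1)`
  have h3 : u ^ 2 ≤ 2 * (Real.cosh u - 1) := by rw [e1]; nlinarith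
  have h4 : 1 ≤ Real.cosh u := Real.one_le_cosh u
  nlinarith [mul_nonneg (by linarith : 0 ≤ Real.cosh u) (by linarith : 0 ≤ 2 * (Real.cosh u - 1) - u ^ 2)]

/-- The lower bound `1/(2u²) - 1/4`, valid near `0`, is traded for one whose error term stays
summable over `u = s, 2s, 3s, …`, with sum `O(1/s)`. -/
lemma odd_ge {u : ℝ} (hu : 0 < u) :
    1 / (2 * u ^ 2) - 2 / (1 + u) ^ 2 ≤ Real.cosh u / (2 * Real.sinh u ^ 2) := by
  have hs : 0 < Real.sinh u := Real.sinh_pos_iff.2 hu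
  have hc : 0 < Real.cosh u := Real.cosh_pos u
  rcases le_total u 1 with h1 | h1
  · have a1 : 1 / (2 * u ^ 2 * Real.cosh u) ≤ Real.cosh u / (2 * Real.sinh u ^ 2) := by
      rw [div_le_div_iff₀ (by positivity) (by positivity)]
      have := pow_le_pow_left₀ hs.le (cosh_ge_sinh_div hu.le) 2
      nlinarith
    have a2 : (1 - u ^ 2 / 2) / (2 * u ^ 2) ≤ 1 / (2 * u ^ 2 * Real.cosh u) := by
      have h3 : Real.cosh u ≤ Real.exp (u ^ 2 / 2) := Real.cosh_le_exp_half_sq u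
      have h4 : 1 - u ^ 2 / 2 ≤ Real.exp (-(u ^ 2 / 2)) := by
        have := Real.add_one_le_exp (-(u ^ 2 / 2)); linarith
      have h5 : Real.exp (-(u ^ 2 / 2)) ≤ 1 / Real.cosh u := by
        rw [Real.exp_neg, ← one_div]; exact one_div_le_one_div_of_le hc h3
      calc (1 - u ^ 2 / 2) / (2 * u ^ 2) ≤ (1 / Real.cosh u) / (2 * u ^ 2) := by
            gcongr; linarith
        _ = _ := by field_simp
    have a3 : (1 - u ^ 2 / 2) / (2 * u ^ 2) = 1 / (2 * u ^ 2) - 1 / 4 := by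
      field_simp; ring
    have a4 : 1 / 4 ≤ 2 / (1 + u) ^ 2 := by
      rw [div_le_div_iff₀ (by positivity) (by positivity)]; nlinarith
    linarith
  · have : 1 / (2 * u ^ 2) ≤ 2 / (1 + u) ^ 2 := by
      rw [div_le_div_iff₀ (by positivity) (by positivity)]; nlinarith
    have : 0 ≤ Real.cosh u / (2 * Real.sinh u ^ 2) := by positivity
    linarith

lemma sum_loss_le {s : ℝ} (hs : 0 < s) (N : ℕ) :
    ∑ k ∈ Finset.range N, 2 / (1 + (k + 1) * s) ^ 2 ≤ 2 / s - 2 / (s * (1 + N * s)) := by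
  induction N with
  | zero => simp
  | succ N ih =>
    rw [Finset.sum_range_succ]
    have : 2 / (1 + (N + 1) * s) ^ 2 ≤
        2 / (s * (1 + N * s)) - 2 / (s * (1 + (N + 1) * s)) := by
      have : 2 / (s * (1 + N * s)) - 2 / (s * (1 + (N + 1) * s))
        = 2 / ((1 + N * s) * (1 + (N + 1) * s)) := by field_simp; ring
      rw [this, sq]
      gcongr
      linarith
    push_cast
    linarith

/-- The summands of `∑_{k ≥ 1, v odd} v e^{-skv}`, with `k = p.1 + 1`, `v = 2 p.2 + 1`. -/
noncomputable def summand (s : ℝ) (p : ℕ × ℕ) : ℝ :=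
  (2 * p.2 + 1 : ℝ) * Real.exp (-(s * ((p.1 + 1) * (2 * p.2 + 1))))

lemma summand_nonneg (s : ℝ) (p : ℕ × ℕ) : 0 ≤ summand s p := by unfold summand; positivity

lemma hasSum_summand_inner {s : ℝ} (hs : 0 < s) (k : ℕ) :
    HasSum (fun i => summand s (k, i))
      (Real.cosh ((k + 1) * s) / (2 * Real.sinh ((k + 1) * s) ^ 2)) := by
  have := hasSum_odd (u := (k + 1) * s) (by positivity)
  convert this using 3 with i
  simp only [summand]
  congr 2
  ring

lemma hasSum_zeta_shift (s : ℝ) :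
    HasSum (fun k : ℕ => 1 / ((k + 1) * s) ^ 2) (π ^ 2 / 6 / s ^ 2) := by
  have h := hasSum_zeta_two
  rw [← hasSum_nat_add_iff' 1] at h
  simp only [Finset.range_one, Finset.sum_singleton, Nat.cast_zero, ne_eq, OfNat.ofNat_ne_zero,
    not_false_eq_true, zero_pow, div_zero, sub_zero] at h
  have e : (fun k : ℕ => 1 / (((k : ℝ) + 1) * s) ^ 2) =
      fun k : ℕ => 1 / ((k + 1 : ℕ) : ℝ) ^ 2 / s ^ 2 := by
    funext k
    push_cast
    rw [mul_pow, div_div]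
  rw [e]
  exact h.div_const (s ^ 2)

lemma summable_outer {s : ℝ} (hs : 0 < s) :
    Summable (fun k : ℕ => Real.cosh ((k + 1) * s) / (2 * Real.sinh ((k + 1) * s) ^ 2)) :=
  Summable.of_nonneg_of_le (fun k => by have := Real.cosh_pos ((k + 1) * s); positivity)
    (fun k => odd_le (by positivity)) (hasSum_zeta_shift s).summable

lemma summable_summand {s : ℝ} (hs : 0 < s) : Summable (summand s) := by
  rw [summable_prod_of_nonneg (summand_nonneg s)]
  refine ⟨fun k => (hasSum_summand_inner hs k).summable, ?_⟩
  simp only [(hasSum_summand_inner hs _).tsum_eq]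
  exact summable_outer hs

lemma tsum_summand_eq {s : ℝ} (hs : 0 < s) :
    ∑' p, summand s p = ∑' k : ℕ, Real.cosh ((k + 1) * s) / (2 * Real.sinh ((k + 1) * s) ^ 2) := by
  rw [(summable_summand hs).tsum_prod' (fun k => (hasSum_summand_inner hs k).summable)]
  simp only [(hasSum_summand_inner hs _).tsum_eq]

lemma tsum_summand_le {s : ℝ} (hs : 0 < s) : ∑' p, summand s p ≤ π ^ 2 / 6 / s ^ 2 := by
  rw [tsum_summand_eq hs, ← (hasSum_zeta_shift s).tsum_eq]
  exact (summable_outer hs).tsum_le_tsum (fun k => odd_le (by positivity))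
    (hasSum_zeta_shift s).summable

lemma le_tsum_summand {s : ℝ} (hs : 0 < s) :
    π ^ 2 / 12 / s ^ 2 - 2 / s ≤ ∑' p, summand s p := by
  have hb : ∀ N, ∑ k ∈ Finset.range N, 2 / (1 + ((k : ℕ) + 1) * s) ^ 2 ≤ 2 / s := fun N =>
    (sum_loss_le hs N).trans (by have : 0 ≤ 2 / (s * (1 + N * s)) := by positivity
                                 linarith)
  have hn : ∀ k : ℕ, 0 ≤ 2 / (1 + ((k : ℕ) + 1) * s) ^ 2 := fun k => by positivity
  have hsum : Summable (fun k : ℕ => 2 / (1 + ((k : ℕ) + 1) * s) ^ 2) :=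
    summable_of_sum_range_le hn hb
  have ht := Real.tsum_le_of_sum_range_le hn hb
  have hz := (hasSum_zeta_shift s).div_const 2
  have h1 := hz.sub hsum.hasSum
  have h2 := hasSum_le (fun k => ?_) h1 (summable_outer hs).hasSum
  · rw [tsum_summand_eq hs]
    have : π ^ 2 / 6 / s ^ 2 / 2 = π ^ 2 / 12 / s ^ 2 := by ring
    linarith
  · have := odd_ge (u := (k + 1) * s) (by positivity)
    have e : 1 / (((k : ℝ) + 1) * s) ^ 2 / 2 = 1 / (2 * ((k + 1) * s) ^ 2) := by
      rw [div_div]; ring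
    simp only [e]
    exact this

/-- The product `kv` attached to the index `p`. -/
noncomputable def wt (p : ℕ × ℕ) : ℝ := (p.1 + 1) * (2 * p.2 + 1)

lemma wt_nonneg (p : ℕ × ℕ) : 0 ≤ wt p := by unfold wt; positivity

lemma summand_eq (s : ℝ) (p : ℕ × ℕ) : summand s p = (2 * p.2 + 1 : ℝ) * Real.exp (-(s * wt p)) := rfl

/-- A power of `wt p` costs half of the exponential decay. -/
lemma wt_pow_mul_summand_le {s : ℝ} (hs : 0 < s) (m : ℕ) (p : ℕ × ℕ) :
    wt p ^ m * summand s p ≤ (2 ^ m * m.factorial / s ^ m) * summand (s / 2) p := by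
  have h := Real.pow_div_factorial_le_exp (s / 2 * wt p) (mul_nonneg (by positivity) (wt_nonneg p)) m
  have e : Real.exp (-(s / 2 * wt p)) = Real.exp (s / 2 * wt p) * Real.exp (-(s * wt p)) := by
    rw [← Real.exp_add]; congr 1; ring
  rw [summand_eq, summand_eq, e]
  have h2 : wt p ^ m ≤ (2 ^ m * m.factorial / s ^ m) * Real.exp (s / 2 * wt p) := by
    rw [mul_pow, div_pow, div_le_iff₀ (by positivity)] at h
    rw [div_mul_eq_mul_div, le_div_iff₀ (by positivity)]
    rw [div_mul_eq_mul_div, div_le_iff₀ (by positivity)] at h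
    linarith
  have h3 : 0 ≤ (2 * p.2 + 1 : ℝ) * Real.exp (-(s * wt p)) := by positivity
  calc _ ≤ _ := mul_le_mul_of_nonneg_right h2 h3
    _ = _ := by ring

lemma summable_wt_pow {s : ℝ} (hs : 0 < s) (m : ℕ) :
    Summable (fun p => wt p ^ m * summand s p) :=
  Summable.of_nonneg_of_le (fun p => mul_nonneg (pow_nonneg (wt_nonneg p) m) (summand_nonneg s p))
    (wt_pow_mul_summand_le hs m) ((summable_summand (half_pos hs)).mul_left _)

lemma tsum_wt_pow_le {s : ℝ} (hs : 0 < s) (m : ℕ) :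
    ∑' p, wt p ^ m * summand s p ≤
      (2 ^ m * m.factorial / s ^ m) * (π ^ 2 / 6 / (s / 2) ^ 2) := by
  calc _ ≤ ∑' p, (2 ^ m * m.factorial / s ^ m) * summand (s / 2) p :=
        (summable_wt_pow hs m).tsum_le_tsum (wt_pow_mul_summand_le hs m)
          ((summable_summand (half_pos hs)).mul_left _)
    _ = _ := tsum_mul_left
    _ ≤ _ := by
      gcongr
      exact tsum_summand_le (half_pos hs)

/-- From `e^{-y} - e^{-2y} ≤ y e^{-y}`, comparing the sums at `s` and `2 s`. -/
lemma le_tsum_wt {s : ℝ} (hs : 0 < s) :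
    (π ^ 2 / 24 / s ^ 2 - 2 / s) / s ≤ ∑' p, wt p * summand s p := by
  have h1 := le_tsum_summand hs
  have h2 := tsum_summand_le (s := 2 * s) (by positivity)
  have h3 : ∑' p, summand s p - ∑' p, summand (2 * s) p ≤ ∑' p, s * (wt p * summand s p) := by
    rw [← (summable_summand hs).tsum_sub (summable_summand (by positivity))]
    refine ((summable_summand hs).sub (summable_summand (by positivity))).tsum_le_tsum ?_ ?_
    · intro p
      rw [summand_eq, summand_eq]
      have e : Real.exp (-(2 * s * wt p)) = Real.exp (-(s * wt p)) * Real.exp (-(s * wt p)) := by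
        rw [← Real.exp_add]; congr 1; ring
      have h4 := Real.add_one_le_exp (-(s * wt p))
      have h5 : 0 ≤ (2 * p.2 + 1 : ℝ) * Real.exp (-(s * wt p)) := by positivity
      rw [e]
      nlinarith [mul_nonneg h5 (sub_nonneg.2 h4)]
    · simpa using (summable_wt_pow hs 1).mul_left s
  rw [tsum_mul_left] at h3
  rw [div_le_iff₀ hs]
  have e : π ^ 2 / 6 / (2 * s) ^ 2 = π ^ 2 / 12 / s ^ 2 - π ^ 2 / 24 / s ^ 2 := by
    field_simp; ring
  rw [e] at h2
  linarith

/-! ### The lower bound for `d n` -/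

/-- The constant `a = π/√12 = 1/A`. -/
noncomputable def a : ℝ := π / Real.sqrt 12

lemma a_pos : 0 < a := by unfold a; positivity

lemma a_sq : a ^ 2 = π ^ 2 / 12 := by
  unfold a; rw [div_pow, Real.sq_sqrt (by norm_num)]

lemma half_le_a : 1 / 2 ≤ a := by
  have h := a_sq
  have := Real.pi_gt_three
  nlinarith [a_pos]

lemma sqrt_sub_ge {r j : ℝ} (hr : 0 < r) (hj0 : 0 ≤ j) (hj : j ≤ r ^ 2) :
    r - j / (2 * r) - j ^ 2 / (2 * r ^ 3) ≤ Real.sqrt (r ^ 2 - j) := by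
  apply Real.le_sqrt_of_sq_le
  obtain ⟨x, rfl⟩ : ∃ x, j = x * r ^ 2 := ⟨j / r ^ 2, by field_simp⟩
  have hr2 : 0 < r ^ 2 := by positivity
  have hx0 : 0 ≤ x := nonneg_of_mul_nonneg_left hj0 hr2
  have hx1 : x ≤ 1 := by nlinarith
  have e : r - x * r ^ 2 / (2 * r) - (x * r ^ 2) ^ 2 / (2 * r ^ 3) = r * ((1 - x) * (1 + x / 2)) := by
    field_simp; ring
  rw [e]
  have : ((1 - x) * (1 + x / 2)) ^ 2 ≤ 1 - x := by
    have h1 : (1 - x) * (1 + x / 2) ^ 2 ≤ 1 := by nlinarith [pow_nonneg hx0 3, pow_nonneg hx0 2]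
    nlinarith [mul_le_mul_of_nonneg_left h1 (sub_nonneg.2 hx1)]
  nlinarith [mul_le_mul_of_nonneg_left this hr2.le]

/-- The minorant `e^{2a√n} / (n+1)^C` of `d n` (up to a constant factor). -/
noncomputable def low (C n : ℕ) : ℝ := Real.exp (2 * a * Real.sqrt n) / ((n : ℝ) + 1) ^ C

/-- First order expansion of `low C (n - j) / low C n`, as a lower bound for all `j ≤ n`. -/
lemma low_step (C n j : ℕ) (hn : 1 ≤ n) (hj : j ≤ n) :
    low C n * ((1 + C * j / (2 * n)) * (1 - a * j ^ 2 / Real.sqrt n ^ 3) *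
      Real.exp (-(a / Real.sqrt n * j))) ≤ low C (n - j) := by
  have hn' : (1 : ℝ) ≤ n := by exact_mod_cast hn
  have hj' : (j : ℝ) ≤ n := by exact_mod_cast hj
  have hj0 : (0 : ℝ) ≤ j := by positivity
  set r := Real.sqrt n with hr
  have hr0 : 0 < r := Real.sqrt_pos.2 (by linarith)
  have hr2 : r ^ 2 = n := Real.sq_sqrt (by linarith)
  have ha := a_pos
  have h1 := sqrt_sub_ge hr0 hj0 (by rw [hr2]; exact hj')
  rw [hr2] at h1
  have hexp : Real.exp (2 * a * r) * ((1 - a * j ^ 2 / r ^ 3) * Real.exp (-(a / r * j))) ≤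
      Real.exp (2 * a * Real.sqrt (n - j)) := by
    have h2 : 1 - a * j ^ 2 / r ^ 3 ≤ Real.exp (-(a * j ^ 2 / r ^ 3)) := by
      have := Real.add_one_le_exp (-(a * j ^ 2 / r ^ 3)); linarith
    calc _ ≤ Real.exp (2 * a * r) * (Real.exp (-(a * j ^ 2 / r ^ 3)) * Real.exp (-(a / r * j))) := by
          gcongr
      _ = Real.exp (2 * a * (r - j / (2 * r) - j ^ 2 / (2 * r ^ 3))) := by
          rw [← Real.exp_add, ← Real.exp_add]; congr 1; field_simp; ring
      _ ≤ _ := by gcongr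
  have hpow : (1 + C * j / (2 * n)) / ((n : ℝ) + 1) ^ C ≤ 1 / ((n : ℝ) - j + 1) ^ C := by
    have h3 : (0 : ℝ) < n - j + 1 := by linarith
    have h4 : 1 + C * ((j : ℝ) / (n + 1)) ≤ (1 + (j : ℝ) / (n + 1)) ^ C :=
      one_add_mul_le_pow (by have : 0 ≤ (j : ℝ) / (n + 1) := by positivity
                             linarith) C
    have h5 : (1 : ℝ) + C * j / (2 * n) ≤ 1 + C * ((j : ℝ) / (n + 1)) := by
      rw [mul_div_assoc]
      gcongr
      linarith
    have h6 : (1 + (j : ℝ) / (n + 1)) * (n - j + 1) ≤ n + 1 := by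
      have e : (1 + (j : ℝ) / (n + 1)) * (n - j + 1) = n + 1 - j ^ 2 / (n + 1) := by
        field_simp; ring
      rw [e]
      have : 0 ≤ (j : ℝ) ^ 2 / (n + 1) := by positivity
      linarith
    rw [div_le_div_iff₀ (by positivity) (by positivity), one_mul]
    calc _ ≤ (1 + (j : ℝ) / (n + 1)) ^ C * ((n : ℝ) - j + 1) ^ C := by
          gcongr; exact h5.trans h4
      _ = ((1 + (j : ℝ) / (n + 1)) * (n - j + 1)) ^ C := (mul_pow _ _ _).symm
      _ ≤ _ := by gcongr
  unfold low
  rw [Nat.cast_sub hj, ← hr]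
  calc _ = (Real.exp (2 * a * r) * ((1 - a * j ^ 2 / r ^ 3) * Real.exp (-(a / r * j)))) *
        ((1 + C * j / (2 * n)) / ((n : ℝ) + 1) ^ C) := by ring
    _ ≤ Real.exp (2 * a * Real.sqrt (n - j)) * ((1 + C * j / (2 * n)) / ((n : ℝ) + 1) ^ C) := by
        gcongr
    _ ≤ Real.exp (2 * a * Real.sqrt (n - j)) * (1 / ((n : ℝ) - j + 1) ^ C) := by gcongr
    _ = _ := by ring

/-- The expansion of `low_step` summed over all pairs; with `r = √n` the main term is
`r² = n`, and for `C > 264` the second order term `(C/4 - 66) r/a` is positive. -/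
lemma tsum_expansion_ge {r C : ℝ} (hr : 0 < r) (hC : 0 ≤ C) :
    ∃ T, HasSum (fun p => summand (a / r) p *
        ((1 + C * wt p / (2 * r ^ 2)) * (1 - a * wt p ^ 2 / r ^ 3))) T ∧
      r ^ 2 + (C / 4 - 66) * (r / a) - 193 * C / a ^ 2 ≤ T := by
  have ha := a_pos
  set s := a / r with hsdef
  have hs : 0 < s := by positivity
  have h0 := (summable_summand hs).hasSum
  have h1 := (summable_wt_pow hs 1).hasSum.mul_left (C / (2 * r ^ 2))
  have h2 := (summable_wt_pow hs 2).hasSum.mul_left (a / r ^ 3)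
  have h3 := (summable_wt_pow hs 3).hasSum.mul_left (C * a / (2 * r ^ 5))
  have hsum := ((h0.add h1).sub h2).sub h3
  have hf : (fun p => summand s p * ((1 + C * wt p / (2 * r ^ 2)) * (1 - a * wt p ^ 2 / r ^ 3))) =
      fun p => summand s p + C / (2 * r ^ 2) * (wt p ^ 1 * summand s p)
        - a / r ^ 3 * (wt p ^ 2 * summand s p) - C * a / (2 * r ^ 5) * (wt p ^ 3 * summand s p) := by
    funext p
    field_simp
    ring
  rw [hf]
  refine ⟨_, hsum, ?_⟩
  · have b0 := le_tsum_summand hs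
    have b1 := le_tsum_wt hs
    have b2 := tsum_wt_pow_le hs 2
    have b3 := tsum_wt_pow_le hs 3
    simp only [pow_one]
    have hpi : π ^ 2 = 12 * a ^ 2 := by rw [a_sq]; ring
    rw [hpi, hsdef] at b0 b1 b2 b3
    have e0 : 12 * a ^ 2 / 12 / (a / r) ^ 2 - 2 / (a / r) = r ^ 2 - 2 * (r / a) := by
      field_simp
    have e1 : (12 * a ^ 2 / 24 / (a / r) ^ 2 - 2 / (a / r)) / (a / r) =
        r ^ 3 / (2 * a) - 2 * r ^ 2 / a ^ 2 := by
      field_simp; ring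
    have e2 : 2 ^ 2 * (Nat.factorial 2 : ℝ) / (a / r) ^ 2 * (12 * a ^ 2 / 6 / (a / r / 2) ^ 2)
        = 64 * r ^ 4 / a ^ 2 := by
      norm_num [Nat.factorial]; field_simp; ring
    have e3 : 2 ^ 3 * (Nat.factorial 3 : ℝ) / (a / r) ^ 3 * (12 * a ^ 2 / 6 / (a / r / 2) ^ 2)
        = 384 * r ^ 5 / a ^ 3 := by
      norm_num [Nat.factorial]; field_simp; ring
    rw [e0] at b0
    rw [e1] at b1
    rw [e2] at b2
    rw [e3] at b3
    rw [← hsdef] at b0 b1 b2 b3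
    have c1 := mul_le_mul_of_nonneg_left b1 (by positivity : 0 ≤ C / (2 * r ^ 2))
    have c2 := mul_le_mul_of_nonneg_left b2 (by positivity : 0 ≤ a / r ^ 3)
    have c3 := mul_le_mul_of_nonneg_left b3 (by positivity : 0 ≤ C * a / (2 * r ^ 5))
    have f1 : C / (2 * r ^ 2) * (r ^ 3 / (2 * a) - 2 * r ^ 2 / a ^ 2) =
        C / 4 * (r / a) - C / a ^ 2 := by field_simp; ring
    have f2 : a / r ^ 3 * (64 * r ^ 4 / a ^ 2) = 64 * (r / a) := by field_simp
    have f3 : C * a / (2 * r ^ 5) * (384 * r ^ 5 / a ^ 3) = 192 * C / a ^ 2 := by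
      field_simp; ring
    rw [f1] at c1
    rw [f2] at c2
    rw [f3] at c3
    have g : 193 * C / a ^ 2 = C / a ^ 2 + 192 * C / a ^ 2 := by ring
    rw [g]
    linarith

/-- The value `C = 268` makes the coefficient `C/4 - 66` of `r/a` in `tsum_expansion_ge`
equal to `1`. -/
lemma low_recurrence : ∃ N0 : ℕ, ∀ n ≥ N0,
    n * low 268 n ≤ ∑ p ∈ pairs n, (2 * p.2 + 1 : ℝ) * low 268 (n - (p.1 + 1) * (2 * p.2 + 1)) := by
  have ha := a_pos
  obtain ⟨N0, hN0⟩ := exists_nat_ge ((193 * 268 / a + 2) ^ 2)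
  refine ⟨N0, fun n hn => ?_⟩
  have hbig : (193 * 268 / a + 2) ^ 2 ≤ (n : ℝ) := hN0.trans (by exact_mod_cast hn)
  have hpos : 0 ≤ 193 * 268 / a := by positivity
  have hr1 : 193 * 268 / a + 2 ≤ Real.sqrt n := Real.le_sqrt_of_sq_le hbig
  have hr0 : 0 < Real.sqrt n := by linarith
  have hr2 : Real.sqrt n ^ 2 = n := Real.sq_sqrt (by positivity)
  have hn1 : 1 ≤ n := by
    have : (1 : ℝ) ≤ n := by rw [← hr2]; nlinarith
    exact_mod_cast this
  obtain ⟨T, hT, hTge⟩ := tsum_expansion_ge (C := 268) hr0 (by norm_num)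
  have hTn : (n : ℝ) ≤ T := by
    refine le_trans ?_ hTge
    rw [hr2]
    have : 193 * 268 / a ^ 2 ≤ Real.sqrt n / a := by
      rw [div_le_div_iff₀ (by positivity) ha]
      have : 193 * 268 ≤ Real.sqrt n * a := by
        rw [← div_le_iff₀ ha]; linarith
      nlinarith
    linarith
  -- the summands with `wt p > n` are nonpositive
  have hle : T ≤ ∑ p ∈ pairs n, summand (a / Real.sqrt n) p *
        ((1 + 268 * wt p / (2 * Real.sqrt n ^ 2)) * (1 - a * wt p ^ 2 / Real.sqrt n ^ 3)) := by
    have := sum_le_hasSum (pairs n) (fun p hp => ?_) hT.neg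
    · simp only [Finset.sum_neg_distrib] at this
      linarith
    · have hw : Real.sqrt n ^ 2 ≤ wt p := by
        rw [mem_pairs, not_le] at hp
        rw [hr2]; unfold wt; exact_mod_cast hp.le
      have : 1 ≤ a * wt p ^ 2 / Real.sqrt n ^ 3 := by
        rw [le_div_iff₀ (by positivity), one_mul]
        have h1 := half_le_a
        have h2 : (Real.sqrt n ^ 2) ^ 2 ≤ wt p ^ 2 := by gcongr
        calc Real.sqrt n ^ 3 ≤ 1 / 2 * (Real.sqrt n ^ 2) ^ 2 := by
              nlinarith [pow_pos hr0 3]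
          _ ≤ _ := by gcongr
      rw [← mul_neg, ← mul_neg]
      refine mul_nonneg (summand_nonneg _ _) (mul_nonneg ?_ (by linarith))
      have := wt_nonneg p
      positivity
  have hlow : 0 ≤ low 268 n := by unfold low; positivity
  calc n * low 268 n ≤ T * low 268 n := by gcongr
    _ ≤ (∑ p ∈ pairs n, summand (a / Real.sqrt n) p *
        ((1 + 268 * wt p / (2 * Real.sqrt n ^ 2)) * (1 - a * wt p ^ 2 / Real.sqrt n ^ 3)))
          * low 268 n := by gcongr
    _ ≤ _ := by
      rw [Finset.sum_mul]
      refine Finset.sum_le_sum fun p hp => ?_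
      have := low_step 268 n _ hn1 (mem_pairs.1 hp)
      have hw : (((p.1 + 1) * (2 * p.2 + 1) : ℕ) : ℝ) = wt p := by unfold wt; push_cast; ring
      rw [hw] at this
      have h2 := mul_le_mul_of_nonneg_left this (by positivity : (0 : ℝ) ≤ 2 * p.2 + 1)
      refine le_trans (le_of_eq ?_) h2
      rw [summand_eq, hr2]
      push_cast
      ring

/-- Lower bound for the number of distinct parts partitions, sharp up to a power of `n`. -/
lemma d_lower : ∃ c : ℝ, 0 < c ∧ ∀ n : ℕ, c * low 268 n ≤ d n := by
  obtain ⟨N0, hN0⟩ := low_recurrence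
  have ha := a_pos
  refine ⟨Real.exp (-(2 * a * Real.sqrt N0)), Real.exp_pos _, fun n => ?_⟩
  set c := Real.exp (-(2 * a * Real.sqrt N0)) with hc
  induction n using Nat.strong_induction_on with
  | _ n ih =>
    rcases lt_or_ge n N0 with h | h
    · have h1 : (1 : ℝ) ≤ d n := by exact_mod_cast d_pos n
      refine le_trans ?_ h1
      have h2 : low 268 n ≤ Real.exp (2 * a * Real.sqrt N0) := by
        unfold low
        refine (div_le_self (Real.exp_pos _).le (one_le_pow₀ (by linarith [n.cast_nonneg (α := ℝ)]))).trans ?_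
        gcongr
      calc c * low 268 n ≤ c * Real.exp (2 * a * Real.sqrt N0) := by gcongr
        _ = 1 := by rw [hc, ← Real.exp_add]; simp
    · rcases Nat.eq_zero_or_pos n with rfl | hn
      · have h1 : (1 : ℝ) ≤ d 0 := by exact_mod_cast d_pos 0
        refine le_trans ?_ h1
        simp only [low, hc, Nat.cast_zero, Real.sqrt_zero, mul_zero, Real.exp_zero, zero_add, one_pow, div_one, mul_one]
        rw [Real.exp_le_one_iff]
        have : 0 ≤ 2 * a * Real.sqrt N0 := by positivity
        linarith
      · have hn' : (0 : ℝ) < n := by exact_mod_cast hn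
        refine le_of_mul_le_mul_left ?_ hn'
        calc (n : ℝ) * (c * low 268 n) = c * (n * low 268 n) := by ring
          _ ≤ c * ∑ p ∈ pairs n, (2 * p.2 + 1 : ℝ) * low 268 (n - (p.1 + 1) * (2 * p.2 + 1)) := by
              gcongr; exact hN0 n h
          _ = ∑ p ∈ pairs n, (2 * p.2 + 1 : ℝ) * (c * low 268 (n - (p.1 + 1) * (2 * p.2 + 1))) := by
              rw [Finset.mul_sum]; refine Finset.sum_congr rfl fun p _ => by ring
          _ ≤ ∑ p ∈ pairs n, (2 * p.2 + 1 : ℝ) * d (n - (p.1 + 1) * (2 * p.2 + 1)) := by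
              refine Finset.sum_le_sum fun p hp => ?_
              gcongr
              exact ih _ (Nat.sub_lt hn (by positivity))
          _ ≤ n * d n := by exact_mod_cast recurrence n

/-! ### The Chernoff bound -/

/-- The factors `(1 + q^k)(1 - q^k) = 1 - q^(2k)` supply the even exponents, the second product the
odd ones. -/
lemma prod_identity (q : ℝ) (n : ℕ) :
    (∏ k ∈ Finset.range n, (1 + q ^ (k + 1))) * (∏ i ∈ Finset.range n, (1 - q ^ (2 * i + 1))) *
      (∏ k ∈ Finset.range n, (1 - q ^ (k + 1))) = ∏ k ∈ Finset.range (2 * n), (1 - q ^ (k + 1)) := by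
  induction n with
  | zero => simp
  | succ n ih =>
    rw [show 2 * (n + 1) = 2 * n + 1 + 1 by ring, Finset.prod_range_succ _ (2 * n + 1),
      Finset.prod_range_succ _ (2 * n), ← ih, Finset.prod_range_succ, Finset.prod_range_succ,
      Finset.prod_range_succ]
    ring

/-- Finite form, as an inequality, of Euler's identity `∏ (1 + q^k) = ∏_{v odd} (1 - q^v)⁻¹`. -/
lemma prod_le_one {q : ℝ} (h0 : 0 < q) (h1 : q < 1) (n : ℕ) :
    (∏ k ∈ Finset.range n, (1 + q ^ (k + 1))) * (∏ i ∈ Finset.range n, (1 - q ^ (2 * i + 1))) ≤ 1 := by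
  have hp : ∀ k : ℕ, 0 < 1 - q ^ (k + 1) := fun k => by
    have := pow_lt_one₀ h0.le h1 (Nat.add_one_ne_zero k); linarith
  have hpos : 0 < ∏ k ∈ Finset.range n, (1 - q ^ (k + 1)) := Finset.prod_pos fun k _ => hp k
  refine le_of_mul_le_mul_right ?_ hpos
  rw [prod_identity, one_mul, two_mul, Finset.prod_range_add]
  refine mul_le_of_le_one_right hpos.le (Finset.prod_le_one (fun k _ => (hp _).le) fun k _ => ?_)
  have : 0 ≤ q ^ (n + k + 1) := by positivity
  linarith

lemma sum_odd_geom_le {u : ℝ} (hu : 0 < u) (n : ℕ) :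
    ∑ i ∈ Finset.range n, Real.exp (-u) ^ (2 * i + 1) ≤ 1 / (2 * u) := by
  set x := Real.exp (-u) with hx
  have hx0 : 0 < x := Real.exp_pos _
  have hx1 : x < 1 := by rw [hx, Real.exp_lt_one_iff]; linarith
  have e1 := one_sub_exp_neg_two u
  rw [← hx] at e1
  have hs : u ≤ Real.sinh u := Real.self_le_sinh_iff.2 hu.le
  have h1 : ∑ i ∈ Finset.range n, x ^ (2 * i + 1) = x * ∑ i ∈ Finset.range n, (x ^ 2) ^ i := by
    rw [Finset.mul_sum]; refine Finset.sum_congr rfl fun i _ => by ring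
  have hg : (∑ i ∈ Finset.range n, (x ^ 2) ^ i) * (1 - x ^ 2) ≤ 1 := by
    rw [geom_sum_mul_neg]
    have : 0 ≤ (x ^ 2) ^ n := by positivity
    linarith
  have hG : 0 ≤ ∑ i ∈ Finset.range n, (x ^ 2) ^ i := by positivity
  rw [h1, le_div_iff₀ (by positivity)]
  rw [e1] at hg
  nlinarith [mul_le_mul_of_nonneg_left hs (mul_nonneg hx0.le hG)]

/-- Expand `-log (1 - q^v)` for odd `v` and sum over `v` first. -/
lemma prod_one_add_le {s : ℝ} (hs : 0 < s) (n : ℕ) :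
    ∏ k ∈ Finset.range n, (1 + Real.exp (-s) ^ (k + 1)) ≤ Real.exp (π ^ 2 / 12 / s) := by
  set q := Real.exp (-s) with hq
  have h0 : 0 < q := Real.exp_pos _
  have h1 : q < 1 := by rw [hq, Real.exp_lt_one_iff]; linarith
  have hp : ∀ i : ℕ, 0 < 1 - q ^ (2 * i + 1) := fun k => by
    have := pow_lt_one₀ h0.le h1 (Nat.add_one_ne_zero (2 * k)); linarith
  have hpos : 0 < ∏ i ∈ Finset.range n, (1 - q ^ (2 * i + 1)) := Finset.prod_pos fun k _ => hp k
  have hlog : -Real.log (∏ i ∈ Finset.range n, (1 - q ^ (2 * i + 1))) ≤ π ^ 2 / 12 / s := by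
    rw [Real.log_prod (fun i _ => (hp i).ne'), ← Finset.sum_neg_distrib]
    have hS : HasSum (fun m : ℕ => ∑ i ∈ Finset.range n, (q ^ (2 * i + 1)) ^ (m + 1) / ((m : ℝ) + 1))
        (∑ i ∈ Finset.range n, -Real.log (1 - q ^ (2 * i + 1))) := by
      refine hasSum_sum fun i _ => ?_
      refine Real.hasSum_pow_div_log_of_abs_lt_one ?_
      rw [abs_of_nonneg (by positivity)]
      linarith [hp i]
    have hZ := (hasSum_zeta_shift 1).mul_right (1 / (2 * s))
    have e : π ^ 2 / 6 / 1 ^ 2 * (1 / (2 * s)) = π ^ 2 / 12 / s := by field_simp; norm_num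
    rw [e] at hZ
    refine hasSum_le (fun m => ?_) hS hZ
    have := sum_odd_geom_le (u := (m + 1) * s) (by positivity) n
    have e2 : ∀ i, (q ^ (2 * i + 1)) ^ (m + 1) = Real.exp (-((m + 1) * s)) ^ (2 * i + 1) := by
      intro i
      rw [← pow_mul, mul_comm (2 * i + 1), pow_mul]
      congr 1
      rw [hq, ← Real.exp_nat_mul]
      congr 1; push_cast; ring
    simp only [e2]
    rw [← Finset.sum_div]
    calc _ ≤ 1 / (2 * (((m : ℝ) + 1) * s)) / ((m : ℝ) + 1) := by gcongr
      _ = _ := by field_simp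
  have h2 := prod_le_one h0 h1 n
  rw [← le_div_iff₀ hpos] at h2
  refine h2.trans ?_
  rw [one_div, ← Real.exp_log hpos, ← Real.exp_neg]
  exact Real.exp_le_exp.2 hlog

/-- `S l m` is the number of parts of `l` of size at most `m`. -/
def S {n : ℕ} (l : Nat.Partition n) (m : ℕ) : ℝ :=
  ∑ k ∈ Finset.Icc 1 m, (l.parts.count k : ℝ)

/-- The probability `q^k/(1+q^k)`, `q = e^{-s}`, as a function of a real variable `x`. -/
noncomputable def pr (s x : ℝ) : ℝ := Real.exp (-(s * x)) / (1 + Real.exp (-(s * x)))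

/-- The mean of `S · m` under the independent (Boltzmann) model. -/
noncomputable def M (s : ℝ) (m : ℕ) : ℝ := ∑ k ∈ Finset.Icc 1 m, pr s k

lemma pr_nonneg (s x : ℝ) : 0 ≤ pr s x := by unfold pr; positivity

lemma M_le {s : ℝ} (hs : 0 < s) (m : ℕ) : M s m ≤ 1 / s := by
  suffices h : M s m ≤ 1 / s - Real.exp (-(s * m)) / s by
    have : 0 ≤ Real.exp (-(s * m)) / s := by positivity
    linarith
  induction m with
  | zero => simp [M]
  | succ m ih =>
    have hM : M s (m + 1) = M s m + pr s (m + 1 : ℕ) := by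
      unfold M; rw [Finset.sum_Icc_succ_top (by omega)]
    set y := Real.exp (-(s * (m + 1 : ℕ))) with hy
    have hy0 : 0 < y := Real.exp_pos _
    have h1 : pr s (m + 1 : ℕ) ≤ y := by
      unfold pr
      exact div_le_self hy0.le (by linarith)
    have h2 : Real.exp (-(s * m)) = y * Real.exp s := by
      rw [hy, ← Real.exp_add]; congr 1; push_cast; ring
    have h3 : y ≤ Real.exp (-(s * m)) / s - y / s := by
      rw [← sub_div, le_div_iff₀ hs, h2]
      have := Real.add_one_le_exp s
      nlinarith
    rw [hM]
    linarith

/-- The weight `q^k`, `q = e^{-s}`, multiplied by `e^z` when `k ≤ m`. -/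
noncomputable def w (s z : ℝ) (m k : ℕ) : ℝ := Real.exp (-(s * k) + if k ≤ m then z else 0)

lemma prod_w {n : ℕ} (l : Nat.Partition n) (s z : ℝ) (m : ℕ) :
    (l.parts.map (w s z m)).prod = Real.exp (-(s * n) + z * S l m) := by
  have key : ∀ t : Multiset ℕ, (∀ x ∈ t, 0 < x) → (t.map (w s z m)).prod =
      Real.exp (-(s * (t.sum : ℕ)) + z * ∑ k ∈ Finset.Icc 1 m, (t.count k : ℝ)) := by
    intro t
    induction t using Multiset.induction_on with
    | empty => simp
    | cons x t ih =>
      intro ht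
      have hx : 0 < x := ht x (Multiset.mem_cons_self x t)
      rw [Multiset.map_cons, Multiset.prod_cons, ih fun y hy => ht y (Multiset.mem_cons_of_mem hy),
        w, ← Real.exp_add]
      congr 1
      have hc : ∑ k ∈ Finset.Icc 1 m, ((x ::ₘ t).count k : ℝ) =
          ∑ k ∈ Finset.Icc 1 m, (t.count k : ℝ) + if x ≤ m then 1 else 0 := by
        simp only [Multiset.count_cons, Nat.cast_add, Finset.sum_add_distrib, Nat.cast_ite,
          Nat.cast_one, Nat.cast_zero, Finset.sum_ite_eq', Finset.mem_Icc]
        congr 2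
        simp only [eq_iff_iff, and_iff_right_iff_imp]
        intro _; exact hx
      rw [hc, Multiset.sum_cons]
      push_cast
      split_ifs <;> ring
  have := key l.parts fun x hx => l.parts_pos hx
  rwa [l.parts_sum] at this

lemma one_add_w_le {s z : ℝ} (hz : |z| ≤ 1) (m k : ℕ) :
    1 + w s z m k ≤ (1 + Real.exp (-(s * k))) *
      Real.exp ((z + z ^ 2) * if k ≤ m then pr s k else 0) := by
  unfold w
  split_ifs with h
  · set x := Real.exp (-(s * k)) with hx
    have hx0 : 0 < x := Real.exp_pos _
    have h1 : Real.exp z - 1 ≤ z + z ^ 2 := by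
      have := (abs_le.1 (Real.abs_exp_sub_one_sub_id_le hz)).2
      linarith
    have h2 := Real.add_one_le_exp ((z + z ^ 2) * pr s k)
    have h3 : 1 + x * Real.exp z = (1 + x) * ((Real.exp z - 1) * pr s k + 1) := by
      unfold pr; rw [← hx]; field_simp; ring
    rw [Real.exp_add, ← hx, h3]
    gcongr
    refine le_trans ?_ h2
    gcongr
    exact pr_nonneg s k
  · simp

/-- Exponential moments of `S · m`, summed over `D_n`, bounded by those of the Boltzmann model. -/
lemma sum_exp_le {n m : ℕ} (hm : m ≤ n) {s z : ℝ} (hs : 0 < s) (hz : |z| ≤ 1) :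
    ∑ l ∈ Nat.Partition.distincts n, Real.exp (z * S l m) ≤
      Real.exp (s * n + π ^ 2 / 12 / s + (z + z ^ 2) * M s m) := by
  have h1 := sum_weights_le n (w s z m) (fun k => by unfold w; positivity)
  have h2 : ∏ k ∈ Finset.Icc 1 n, (1 + w s z m k) ≤
      Real.exp (π ^ 2 / 12 / s) * Real.exp ((z + z ^ 2) * M s m) := by
    calc _ ≤ ∏ k ∈ Finset.Icc 1 n, ((1 + Real.exp (-(s * k))) *
          Real.exp ((z + z ^ 2) * if k ≤ m then pr s k else 0)) :=
          Finset.prod_le_prod (fun k _ => by unfold w; positivity) fun k _ => one_add_w_le hz m k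
      _ = (∏ k ∈ Finset.range n, (1 + Real.exp (-s) ^ (k + 1))) *
          Real.exp ((z + z ^ 2) * M s m) := by
          rw [Finset.prod_mul_distrib, ← Real.exp_sum, ← Finset.mul_sum]
          congr 1
          · rw [Finset.range_eq_Ico, Finset.prod_Ico_add' (fun k => 1 + Real.exp (-s) ^ k) 0 n 1]
            refine Finset.prod_congr (by ext; simp) fun k _ => ?_
            rw [← Real.exp_nat_mul]; congr 2; ring
          · rw [← Finset.sum_filter]
            congr 2
            unfold M
            refine Finset.sum_congr ?_ fun _ _ => rfl
            ext k; simp; omega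
      _ ≤ _ := by
          gcongr
          exact prod_one_add_le hs n
  simp only [prod_w, Real.exp_add, ← Finset.mul_sum] at h1
  rw [Real.exp_add, Real.exp_add]
  have h3 := mul_le_mul_of_nonneg_left (h1.trans h2) (Real.exp_pos (s * n)).le
  rw [← mul_assoc, ← Real.exp_add, add_neg_cancel, Real.exp_zero, one_mul] at h3
  linarith

/-- Markov's inequality for `e^{z S}`; the choice `s = a/√n` makes the normalising factor
`s n + π²/(12 s)` equal to `2 a √n`. -/
lemma one_sided {n m : ℕ} (hn : 0 < n) (hm : m ≤ n) {z y : ℝ} (hz : |z| ≤ 1) :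
    (((Nat.Partition.distincts n).filter
      (fun l => y ≤ z * (S l m - M (a / Real.sqrt n) m))).card : ℝ) ≤
      Real.exp (2 * a * Real.sqrt n + z ^ 2 * (Real.sqrt n / a) - y) := by
  have ha := a_pos
  have hr : 0 < Real.sqrt n := Real.sqrt_pos.2 (by exact_mod_cast hn)
  have hr2 : Real.sqrt n ^ 2 = n := Real.sq_sqrt (by positivity)
  set r := Real.sqrt n
  set s := a / r with hsdef
  have hs : 0 < s := by positivity
  have h1 := sum_exp_le hm hs hz
  have hM := M_le hs m
  have e : s * n + π ^ 2 / 12 / s = 2 * a * r := by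
    rw [← a_sq, ← hr2, hsdef]; field_simp; norm_num
  have e' : 1 / s = r / a := by rw [hsdef]; field_simp
  rw [e'] at hM
  rw [e] at h1
  calc (((Nat.Partition.distincts n).filter (fun l => y ≤ z * (S l m - M s m))).card : ℝ)
      = ∑ l ∈ (Nat.Partition.distincts n).filter (fun l => y ≤ z * (S l m - M s m)), (1 : ℝ) := by simp
    _ ≤ ∑ l ∈ (Nat.Partition.distincts n).filter (fun l => y ≤ z * (S l m - M s m)),
          Real.exp (z * S l m) * Real.exp (-(z * M s m) - y) := by
        refine Finset.sum_le_sum fun l hl => ?_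
        rw [← Real.exp_add, Real.one_le_exp_iff]
        have := (Finset.mem_filter.1 hl).2
        linarith
    _ ≤ ∑ l ∈ Nat.Partition.distincts n, Real.exp (z * S l m) * Real.exp (-(z * M s m) - y) :=
        Finset.sum_le_sum_of_subset_of_nonneg (Finset.filter_subset _ _) fun _ _ _ => by positivity
    _ = (∑ l ∈ Nat.Partition.distincts n, Real.exp (z * S l m)) * Real.exp (-(z * M s m) - y) := by
        rw [Finset.sum_mul]
    _ ≤ Real.exp (2 * a * r + (z + z ^ 2) * M s m) * Real.exp (-(z * M s m) - y) := by gcongr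
    _ = Real.exp (2 * a * r + z ^ 2 * M s m - y) := by rw [← Real.exp_add]; congr 1; ring
    _ ≤ _ := by gcongr

lemma two_sided {n m : ℕ} (hn : 0 < n) (hm : m ≤ n) {z y : ℝ} (hz0 : 0 ≤ z) (hz : z ≤ 1) :
    (((Nat.Partition.distincts n).filter
      (fun l => y ≤ |S l m - M (a / Real.sqrt n) m|)).card : ℝ) ≤
      2 * Real.exp (2 * a * Real.sqrt n + z ^ 2 * (Real.sqrt n / a) - z * y) := by
  have h1 := one_sided hn hm (z := z) (y := z * y) (by rwa [abs_of_nonneg hz0])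
  have h2 := one_sided hn hm (z := -z) (y := z * y) (by rwa [abs_neg, abs_of_nonneg hz0])
  rw [neg_sq] at h2
  have h3 : (((Nat.Partition.distincts n).filter
      (fun l => y ≤ |S l m - M (a / Real.sqrt n) m|)).card : ℝ) ≤
      ((Nat.Partition.distincts n).filter
        (fun l => z * y ≤ z * (S l m - M (a / Real.sqrt n) m))).card +
      ((Nat.Partition.distincts n).filter
        (fun l => z * y ≤ -z * (S l m - M (a / Real.sqrt n) m))).card := by
    norm_cast
    refine (Finset.card_le_card ?_).trans (Finset.card_union_le _ _)
    intro l hl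
    rw [Finset.mem_filter] at hl
    rw [Finset.mem_union, Finset.mem_filter, Finset.mem_filter]
    rcases le_abs.1 hl.2 with h | h
    · exact Or.inl ⟨hl.1, by gcongr⟩
    · exact Or.inr ⟨hl.1, by nlinarith⟩
  linarith

/-! ### The limit shape -/

/-- The limit shape in unscaled coordinates: a closed form of `∫_0^x pr s`. -/
noncomputable def Lam (s x : ℝ) : ℝ := 1 / s * Real.log (2 / (1 + Real.exp (-(s * x))))

/-- Jensen's inequality for `exp`. -/
lemma exp_mul_le {p h : ℝ} (h0 : 0 ≤ p) (h1 : p ≤ 1) :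
    Real.exp (p * h) ≤ 1 - p + p * Real.exp h := by
  have := convexOn_exp.2 (Set.mem_univ 0) (Set.mem_univ h) (sub_nonneg.2 h1) h0 (by ring)
  simpa using this

lemma pr_le_one (s x : ℝ) : pr s x ≤ 1 := by
  unfold pr
  rw [div_le_one (by positivity)]
  linarith

lemma Lam_sub {s : ℝ} (x y : ℝ) :
    Lam s y - Lam s x =
      1 / s * (Real.log (1 + Real.exp (-(s * x))) - Real.log (1 + Real.exp (-(s * y)))) := by
  unfold Lam
  rw [Real.log_div (by norm_num) (by positivity), Real.log_div (by norm_num) (by positivity)]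
  ring

lemma le_Lam_sub {s : ℝ} (hs : 0 < s) (x y : ℝ) : pr s y * (y - x) ≤ Lam s y - Lam s x := by
  rw [Lam_sub, div_mul_eq_mul_div, one_mul, le_div_iff₀ hs, ← Real.log_div (by positivity) (by positivity)]
  rw [Real.le_log_iff_exp_le (by positivity)]
  have := exp_mul_le (h := s * (y - x)) (pr_nonneg s y) (pr_le_one s y)
  rw [show pr s y * (y - x) * s = pr s y * (s * (y - x)) by ring]
  refine this.trans (le_of_eq ?_)
  have e : Real.exp (-(s * x)) = Real.exp (-(s * y)) * Real.exp (s * (y - x)) := by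
    rw [← Real.exp_add]; congr 1; ring
  rw [e]
  unfold pr
  field_simp
  ring

lemma Lam_sub_le {s : ℝ} (hs : 0 < s) (x y : ℝ) : Lam s y - Lam s x ≤ pr s x * (y - x) := by
  have := le_Lam_sub hs y x
  linarith

lemma Lam_mono {s : ℝ} (hs : 0 < s) {x y : ℝ} (h : x ≤ y) : Lam s x ≤ Lam s y := by
  have := le_Lam_sub hs x y
  have := mul_nonneg (pr_nonneg s y) (sub_nonneg.2 h)
  linarith

/-- A sum of values of the decreasing function `pr s` against its integral. -/
lemma Lam_M {s : ℝ} (hs : 0 < s) (m : ℕ) : |M s m - Lam s m| ≤ 1 := by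
  have hM : ∀ m : ℕ, M s (m + 1) = M s m + pr s (m + 1 : ℕ) := fun m => by
      unfold M; rw [Finset.sum_Icc_succ_top (by omega)]
  have h0 : Lam s 0 = 0 := by simp [Lam]; norm_num
  have h1 : M s m ≤ Lam s m := by
    induction m with
    | zero => simp [M, h0]
    | succ m ih =>
      have := le_Lam_sub hs m (m + 1 : ℕ)
      rw [hM]
      push_cast at this ⊢
      linarith
  have h2 : Lam s m ≤ M s m + 1 - pr s m := by
    have hp := pr_le_one s 0
    clear h1
    induction m with
    | zero => simpa [M, h0] using hp
    | succ m ih =>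
      have := Lam_sub_le hs m (m + 1 : ℕ)
      rw [hM]
      push_cast at this ⊢
      linarith
  have := pr_nonneg s m
  rw [abs_le]; constructor <;> linarith

lemma Lam_tail {s : ℝ} (hs : 0 < s) {x y : ℝ} (hx : 0 < x) :
    Lam s y - Lam s x ≤ 1 / (s ^ 2 * x) := by
  rw [Lam_sub]
  have h1 : 0 ≤ Real.log (1 + Real.exp (-(s * y))) := Real.log_nonneg (by linarith [Real.exp_pos (-(s * y))])
  have h2 : Real.log (1 + Real.exp (-(s * x))) ≤ Real.exp (-(s * x)) := by
    have := Real.log_le_sub_one_of_pos (x := 1 + Real.exp (-(s * x))) (by positivity)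
    linarith
  have h3 : Real.exp (-(s * x)) ≤ 1 / (s * x) := by
    rw [Real.exp_neg, ← one_div]
    refine one_div_le_one_div_of_le (by positivity) ?_
    linarith [Real.add_one_le_exp (s * x)]
  calc _ ≤ 1 / s * (1 / (s * x)) := by gcongr; linarith
    _ = _ := by field_simp

lemma L_eq {r : ℝ} (hr : 0 < r) (t : ℝ) : L t = 1 / r * Lam (a / r) (t * r) := by
  have ha := a_pos
  have hA : A = 1 / a := by unfold A a; rw [one_div_div]
  unfold L Lam
  rw [hA]
  have e : -t / (1 / a) = -(a / r * (t * r)) := by field_simp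
  rw [e]
  field_simp

lemma S_eq_of_le {n : ℕ} (l : Nat.Partition n) {m : ℕ} (h : n ≤ m) : S l m = S l n := by
  unfold S
  symm
  refine Finset.sum_subset (Finset.Icc_subset_Icc_right h) fun k hk hk' => ?_
  rw [Finset.mem_Icc] at hk hk'
  have : k ∉ l.parts := fun hm => hk' ⟨hk.1, Nat.Partition.le_of_mem_parts hm⟩
  simp [Multiset.count_eq_zero_of_notMem this]

/-- Beyond `m = n` the count is constant and `Lam` has almost reached its limit, so control for
`m ≤ n` suffices. -/
lemma profile_close {n : ℕ} (hn : 0 < n) (l : Nat.Partition n) {y : ℝ}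
    (h : ∀ m ≤ n, |S l m - M (a / Real.sqrt n) m| ≤ y) {t : ℝ} (ht : 0 ≤ t) :
    |(1 / Real.sqrt n) * (∑ k ∈ Finset.Icc 1 ⌊t * Real.sqrt n⌋₊, (X l k : ℝ)) - L t| ≤
      1 / Real.sqrt n * (y + 6) := by
  have ha := a_pos
  have hr : 0 < Real.sqrt n := Real.sqrt_pos.2 (by exact_mod_cast hn)
  have hr2 : Real.sqrt n ^ 2 = n := Real.sq_sqrt (by positivity)
  set r := Real.sqrt n
  have hs : 0 < a / r := by positivity
  rw [L_eq hr, ← mul_sub, abs_mul, abs_of_pos (by positivity : 0 < 1 / r)]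
  gcongr
  change |S l ⌊t * r⌋₊ - Lam (a / r) (t * r)| ≤ y + 6
  have hx : 0 ≤ t * r := by positivity
  set x := t * r
  have hfl := Nat.floor_le hx
  have hlt := Nat.lt_floor_add_one x
  have key : ∃ m ≤ n, S l ⌊x⌋₊ = S l m ∧ Lam (a / r) m ≤ Lam (a / r) x ∧
      Lam (a / r) x - Lam (a / r) m ≤ 5 := by
    rcases le_total ⌊x⌋₊ n with hc | hc
    · refine ⟨⌊x⌋₊, hc, rfl, Lam_mono hs hfl, ?_⟩
      have h1 := Lam_sub_le hs ⌊x⌋₊ x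
      have h2 := pr_le_one (a / r) ⌊x⌋₊
      have h3 := pr_nonneg (a / r) ⌊x⌋₊
      nlinarith
    · refine ⟨n, le_rfl, S_eq_of_le l hc, Lam_mono hs ?_, ?_⟩
      · exact le_trans (by exact_mod_cast hc) hfl
      · refine (Lam_tail hs (by exact_mod_cast hn)).trans ?_
        have e : (a / r) ^ 2 * n = a ^ 2 := by rw [← hr2]; field_simp
        rw [e, div_le_iff₀ (by positivity)]
        nlinarith [half_le_a]
  obtain ⟨m, hm, hS, h1, h2⟩ := key
  rw [hS]
  have h3 := abs_le.1 (h m hm)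
  have h4 := abs_le.1 (Lam_M hs m)
  rw [abs_le]
  constructor <;> linarith

/-- Union bound over `m ≤ n`. -/
lemma bad_card_le {n : ℕ} (hn : 0 < n) {z y : ℝ} (hz0 : 0 ≤ z) (hz : z ≤ 1) :
    (((Nat.Partition.distincts n).filter
      (fun l => ¬ ∀ m ≤ n, |S l m - M (a / Real.sqrt n) m| ≤ y)).card : ℝ) ≤
      (n + 1) * (2 * Real.exp (2 * a * Real.sqrt n + z ^ 2 * (Real.sqrt n / a) - z * y)) := by
  classical
  have hsub : (Nat.Partition.distincts n).filter
      (fun l => ¬ ∀ m ≤ n, |S l m - M (a / Real.sqrt n) m| ≤ y) ⊆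
      (Finset.range (n + 1)).biUnion fun m => (Nat.Partition.distincts n).filter
        (fun l => y ≤ |S l m - M (a / Real.sqrt n) m|) := by
    intro l hl
    rw [Finset.mem_filter] at hl
    obtain ⟨hl, h⟩ := hl
    push Not at h
    obtain ⟨m, hm, h⟩ := h
    rw [Finset.mem_biUnion]
    exact ⟨m, Finset.mem_range.2 (by omega), Finset.mem_filter.2 ⟨hl, h.le⟩⟩
  calc _ ≤ ((∑ m ∈ Finset.range (n + 1), ((Nat.Partition.distincts n).filter
        (fun l => y ≤ |S l m - M (a / Real.sqrt n) m|)).card : ℕ) : ℝ) := by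
        exact_mod_cast (Finset.card_le_card hsub).trans Finset.card_biUnion_le
    _ ≤ ∑ m ∈ Finset.range (n + 1),
        2 * Real.exp (2 * a * Real.sqrt n + z ^ 2 * (Real.sqrt n / a) - z * y) := by
        push_cast
        refine Finset.sum_le_sum fun m hm => two_sided hn ?_ hz0 hz
        have := Finset.mem_range.1 hm
        omega
    _ = _ := by simp

lemma tendsto_error {δ : ℝ} (hδ : 0 < δ) (K : ℝ) :
    Tendsto (fun n : ℕ => K * (((n : ℝ) + 1) ^ 269 * Real.exp (-((n : ℝ) ^ δ / 2)))) atTop (nhds 0) := by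
  rw [← mul_zero K]
  refine Tendsto.const_mul K ?_
  have h1 : Tendsto (fun n : ℕ => (n : ℝ) ^ δ) atTop atTop :=
    (tendsto_rpow_atTop hδ).comp tendsto_natCast_atTop_atTop
  have h2 := (tendsto_rpow_mul_exp_neg_mul_atTop_nhds_zero (269 / δ) (1 / 2) (by norm_num)).comp h1
  have h3 := h2.const_mul (2 ^ 269)
  rw [mul_zero] at h3
  refine squeeze_zero' (Eventually.of_forall fun n => by positivity) ?_ h3
  filter_upwards [eventually_ge_atTop 1] with n hn
  have hn' : (1 : ℝ) ≤ n := by exact_mod_cast hn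
  simp only [Function.comp]
  rw [← Real.rpow_mul (by positivity), mul_div_cancel₀ _ hδ.ne', ← mul_assoc]
  have e : (n : ℝ) ^ (269 : ℝ) = (n : ℝ) ^ (269 : ℕ) := by
    rw [← Real.rpow_natCast]; norm_num
  rw [e, ← mul_pow]
  have e2 : -((n : ℝ) ^ δ / 2) = -(1 / 2) * (n : ℝ) ^ δ := by ring
  rw [e2]
  gcongr
  linarith

end LimitShape


open LimitShape in
theorem limit_shape_in_probability (δ : ℝ) (hδ0 : 0 < δ) (hδ : δ < 1 / 4) :
    Tendsto
      (fun n : ℕ => Pn n (fun lam => ∀ t : ℝ, 0 ≤ t →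
        |(1 / Real.sqrt n) * (∑ k ∈ Finset.Icc 1 ⌊t * Real.sqrt n⌋₊, (X lam k : ℝ)) - L t|
          ≤ (n : ℝ) ^ (-(1 / 4 : ℝ) + δ)))
      atTop (nhds 1) := by
  classical
  obtain ⟨c, hc, hd⟩ := d_lower
  have ha := a_pos
  have hK := tendsto_error hδ0 (2 * Real.exp (1 / a) / c)
  have hlow := (tendsto_const_nhds (x := (1 : ℝ))).sub hK
  rw [sub_zero] at hlow
  refine tendsto_of_tendsto_of_tendsto_of_le_of_le' hlow tendsto_const_nhds ?_ ?_
  · have hbig : ∀ᶠ n : ℕ in atTop, (12 : ℝ) ≤ (n : ℝ) ^ (1 / 4 + δ) :=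
      ((tendsto_rpow_atTop (by linarith)).comp tendsto_natCast_atTop_atTop).eventually_ge_atTop 12
    filter_upwards [hbig, eventually_ge_atTop 1] with n h12 hn
    have hn' : (1 : ℝ) ≤ n := by exact_mod_cast hn
    have hn0 : (0 : ℝ) < n := by linarith
    set y := (n : ℝ) ^ (1 / 4 + δ) / 2 with hy
    set z := (n : ℝ) ^ (-(1 / 4 : ℝ)) with hz
    have hz0 : 0 ≤ z := by positivity
    have hz1 : z ≤ 1 := Real.rpow_le_one_of_one_le_of_nonpos hn' (by norm_num)
    have hzy : z * y = (n : ℝ) ^ δ / 2 := by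
      rw [hy, hz, ← mul_div_assoc, ← Real.rpow_add hn0]; congr 2; ring
    have hzr : z ^ 2 * (Real.sqrt n / a) = 1 / a := by
      rw [hz, ← Real.rpow_natCast, ← Real.rpow_mul hn0.le, Real.sqrt_eq_rpow, ← mul_div_assoc,
        ← Real.rpow_add hn0]
      norm_num
    have hbad := bad_card_le hn (y := y) hz0 hz1
    rw [hzy, hzr] at hbad
    have hdn : (0 : ℝ) < d n := by exact_mod_cast d_pos n
    have hgood : ∀ l : Nat.Partition n, (∀ m ≤ n, |S l m - M (a / Real.sqrt n) m| ≤ y) →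
        ∀ t : ℝ, 0 ≤ t →
        |(1 / Real.sqrt n) * (∑ k ∈ Finset.Icc 1 ⌊t * Real.sqrt n⌋₊, (X l k : ℝ)) - L t|
          ≤ (n : ℝ) ^ (-(1 / 4 : ℝ) + δ) := by
      intro l hl t ht
      refine (profile_close hn l hl ht).trans ?_
      have e : (n : ℝ) ^ (-(1 / 4 : ℝ) + δ) = 1 / Real.sqrt n * (n : ℝ) ^ (1 / 4 + δ) := by
        rw [Real.sqrt_eq_rpow, one_div ((n : ℝ) ^ (1 / 2 : ℝ)), ← Real.rpow_neg hn0.le,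
          ← Real.rpow_add hn0]
        congr 1; ring
      rw [e]
      gcongr
      linarith
    have hcount : (d n : ℝ) ≤
        (((Nat.Partition.distincts n).filter (fun lam : Nat.Partition n => ∀ t : ℝ, 0 ≤ t →
        |(1 / Real.sqrt n) * (∑ k ∈ Finset.Icc 1 ⌊t * Real.sqrt n⌋₊, (X lam k : ℝ)) - L t|
          ≤ (n : ℝ) ^ (-(1 / 4 : ℝ) + δ))).card : ℝ) +
        (((Nat.Partition.distincts n).filter
          (fun l => ¬ ∀ m ≤ n, |S l m - M (a / Real.sqrt n) m| ≤ y)).card : ℝ) := by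
      rw [d, ← Nat.cast_add, Nat.cast_le]
      refine (Finset.card_le_card ?_).trans (Finset.card_union_le _ _)
      intro l hl
      rw [Finset.mem_union, Finset.mem_filter, Finset.mem_filter]
      by_cases h : ∀ m ≤ n, |S l m - M (a / Real.sqrt n) m| ≤ y
      · exact Or.inl ⟨hl, hgood l h⟩
      · exact Or.inr ⟨hl, h⟩
    have hratio : (n + 1) * (2 * Real.exp (2 * a * Real.sqrt n + 1 / a - (n : ℝ) ^ δ / 2)) ≤
        2 * Real.exp (1 / a) / c * (((n : ℝ) + 1) ^ 269 * Real.exp (-((n : ℝ) ^ δ / 2))) * d n := by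
      calc _ = 2 * Real.exp (1 / a) / c * (((n : ℝ) + 1) ^ 269 * Real.exp (-((n : ℝ) ^ δ / 2))) *
            (c * low 268 n) := by
            rw [sub_eq_add_neg, Real.exp_add, Real.exp_add, low]
            field_simp
        _ ≤ _ := by
            gcongr
            exact hd n
    unfold Pn
    change _ ≤ _ / (d n : ℝ)
    rw [le_div_iff₀ hdn, sub_mul, one_mul]
    have := hbad.trans hratio
    have hfin := sub_le_iff_le_add.2 (hcount.trans (add_le_add_right this _))
    convert hfin using 1
  · refine Eventually.of_forall fun n => ?_
    unfold Pn
    refine div_le_one_of_le₀ ?_ (by positivity)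
    exact_mod_cast Finset.card_filter_le _ _
end

section
/- The following identity holds: ∫_0^1 (2e^{−t}/(1 + e^{−t}) − 1)·t^{−1} dt + ∫_1^∞ 2e^{−t}/(t·(1 + e^{−t})) dt = log(π/2) − γ, where γ is the Euler–Mascheroni constant. -/
/-!
Write `x = exp (-t)`, so that `2x/(1+x) = x + x(1-x)/(1+x)`. This splits the left-hand side into
two constants.

* The part coming from `x` is `∫₀¹ (exp (-t) - 1)/t + ∫₁^∞ exp (-t)/t`. Integrating by parts on each
  interval turns it into `∫₀^∞ log t * exp (-t) = Γ'(1) = -γ` (`integral_log_mul_exp_neg`,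
  `integral_exp_neg_regularized`).
* The remaining part `∫₀^∞ x(1-x)/((1+x)t)` equals `log (π/2)` (`integral_remainder`): expand
  `x(1-x)/(1+x) = ∑ (-1)ⁿ (x^(n+1) - x^(n+2))`, integrate termwise by Frullani's formula
  `∫₀^∞ (x^(n+1) - x^(n+2))/t = log ((n+2)/(n+1))`, and sum the logarithms by Wallis' product. The
  partial sums of even length are the remainder times `1 - x^(2K)`, so dominated convergence
  applies with bound `exp (-t)`.
-/

open scoped Real
open MeasureTheory
open Real Set Filter Topology

lemma one_sub_exp_neg_mul_inv_mem {t : ℝ} (ht : 0 < t) :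
    0 ≤ (1 - exp (-t)) * t⁻¹ ∧ (1 - exp (-t)) * t⁻¹ ≤ 1 := by
  have h1 : exp (-t) ≤ 1 := exp_le_one_iff.2 (by linarith)
  have h2 := add_one_le_exp (-t)
  refine ⟨mul_nonneg (by linarith) (by positivity), ?_⟩
  rw [← div_eq_mul_inv, div_le_one ht]
  linarith

lemma integrableOn_of_abs_le_exp_neg {f : ℝ → ℝ} (hf : Measurable f)
    (h : ∀ t : ℝ, 0 < t → |f t| ≤ exp (-t)) : IntegrableOn f (Ioi 0) := by
  refine Integrable.mono' (integrableOn_exp_neg_Ioi 0) hf.aestronglyMeasurable ?_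
  filter_upwards [ae_restrict_mem measurableSet_Ioi] with t ht
  exact h t ht

lemma integrableOn_frullani_term (n : ℕ) :
    IntegrableOn (fun t : ℝ => t⁻¹ * (exp (-t) ^ (n + 1) - exp (-t) ^ (n + 2))) (Ioi 0) := by
  refine integrableOn_of_abs_le_exp_neg (by fun_prop) fun t ht => ?_
  obtain ⟨h0, h1⟩ := one_sub_exp_neg_mul_inv_mem ht
  have hx : exp (-t) ≤ 1 := exp_le_one_iff.2 (by linarith)
  have hpow : exp (-t) ^ n ≤ 1 := pow_le_one₀ (exp_pos _).le hx
  have e : t⁻¹ * (exp (-t) ^ (n + 1) - exp (-t) ^ (n + 2))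
      = exp (-t) * (exp (-t) ^ n * ((1 - exp (-t)) * t⁻¹)) := by ring
  rw [e, abs_of_nonneg (by positivity)]
  exact mul_le_of_le_one_right (exp_pos _).le (mul_le_one₀ hpow h0 h1)

lemma integral_frullani_term (n : ℕ) :
    ∫ t in Ioi (0 : ℝ), t⁻¹ * (exp (-t) ^ (n + 1) - exp (-t) ^ (n + 2))
      = log ((n + 2) / (n + 1)) := by
  have hpow : ∀ (m : ℕ) (t : ℝ), exp (-t) ^ m = exp (-((m : ℝ) * t)) := fun m t => by
    rw [← exp_nat_mul]; ring_nf
  have hc : Continuous fun t : ℝ => exp (-t) := by fun_prop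
  have hint := integrableOn_frullani_term n
  simp_rw [hpow] at hint ⊢
  have := Frullani.integral_Ioi_eq (f := fun t : ℝ => exp (-t)) (a := ((n + 1 : ℕ) : ℝ))
    (b := ((n + 2 : ℕ) : ℝ)) (L := 1) (R := 0)
    (hc.continuousOn.locallyIntegrableOn measurableSet_Ioi) (by positivity) (by positivity)
    ((hc.tendsto' 0 1 (by simp)).mono_left nhdsWithin_le_nhds)
    tendsto_exp_neg_atTop_nhds_zero hint
  simpa using this

/-- The partial sums of even length of the alternating Frullani series, in closed form. -/
lemma sum_frullani_terms (t : ℝ) (K : ℕ) :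
    ∑ k ∈ Finset.range K, (t⁻¹ * (exp (-t) ^ (2 * k + 1) - exp (-t) ^ (2 * k + 2))
        - t⁻¹ * (exp (-t) ^ (2 * k + 1 + 1) - exp (-t) ^ (2 * k + 1 + 2)))
      = exp (-t) * (1 - exp (-t)) / (1 + exp (-t)) * t⁻¹ * (1 - exp (-t) ^ (2 * K)) := by
  have hx : 1 + exp (-t) ≠ 0 := by positivity
  induction K with
  | zero => simp
  | succ K ih =>
    rw [Finset.sum_range_succ, ih]
    generalize exp (-t) = x at hx
    generalize t⁻¹ = s
    field_simp
    ring

lemma log_wallis_eq_sum (K : ℕ) :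
    log (Wallis.W K) = ∑ k ∈ Finset.range K,
      (log (((2 * k : ℕ) + 2) / ((2 * k : ℕ) + 1))
        - log (((2 * k + 1 : ℕ) + 2) / ((2 * k + 1 : ℕ) + 1))) := by
  induction K with
  | zero => simp [Wallis.W]
  | succ K ih =>
    rw [Finset.sum_range_succ, ← ih, Wallis.W_succ,
      log_mul (Wallis.W_pos K).ne' (by positivity), ← log_div (by positivity) (by positivity)]
    congr 2
    push_cast
    field_simp
    ring

lemma remainder_mem {t : ℝ} (ht : 0 < t) :
    0 ≤ exp (-t) * (1 - exp (-t)) / (1 + exp (-t)) * t⁻¹ ∧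
      exp (-t) * (1 - exp (-t)) / (1 + exp (-t)) * t⁻¹ ≤ exp (-t) := by
  obtain ⟨h0, h1⟩ := one_sub_exp_neg_mul_inv_mem ht
  have e : exp (-t) * (1 - exp (-t)) / (1 + exp (-t)) * t⁻¹
      = exp (-t) * ((1 - exp (-t)) * t⁻¹) / (1 + exp (-t)) := by ring
  rw [e]
  have hx := exp_pos (-t)
  refine ⟨by positivity, ?_⟩
  rw [div_le_iff₀ (by positivity)]
  exact mul_le_mul_of_nonneg_left (by linarith) hx.le

lemma integrableOn_remainder :
    IntegrableOn (fun t : ℝ => exp (-t) * (1 - exp (-t)) / (1 + exp (-t)) * t⁻¹) (Ioi 0) := by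
  refine integrableOn_of_abs_le_exp_neg (by fun_prop) fun t ht => ?_
  rw [abs_of_nonneg (remainder_mem ht).1]
  exact (remainder_mem ht).2

lemma integral_remainder :
    ∫ t in Ioi (0 : ℝ), exp (-t) * (1 - exp (-t)) / (1 + exp (-t)) * t⁻¹ = log (π / 2) := by
  have hW : Tendsto (fun K => log (Wallis.W K)) atTop (𝓝 (log (π / 2))) :=
    Wallis.tendsto_W_nhds_pi_div_two.log (by positivity)
  have hsum : ∀ K : ℕ, ∫ t in Ioi (0 : ℝ), exp (-t) * (1 - exp (-t)) / (1 + exp (-t)) * t⁻¹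
      * (1 - exp (-t) ^ (2 * K)) = log (Wallis.W K) := fun K => by
    simp_rw [← sum_frullani_terms]
    rw [integral_finsetSum, log_wallis_eq_sum]
    swap
    · exact fun k _ => (integrableOn_frullani_term (2 * k)).sub
        (integrableOn_frullani_term (2 * k + 1))
    refine Finset.sum_congr rfl fun k _ => ?_
    rw [integral_sub (integrableOn_frullani_term (2 * k)) (integrableOn_frullani_term (2 * k + 1)),
      integral_frullani_term, integral_frullani_term]
  refine tendsto_nhds_unique ?_ hW
  simp_rw [← hsum]
  refine tendsto_integral_of_dominated_convergence (fun t => exp (-t))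
    (fun K => Measurable.aestronglyMeasurable (by fun_prop)) (integrableOn_exp_neg_Ioi 0) ?_ ?_
  · intro K
    filter_upwards [ae_restrict_mem measurableSet_Ioi] with t ht
    obtain ⟨h0, h1⟩ := remainder_mem ht
    have hx : exp (-t) ≤ 1 := exp_le_one_iff.2 (by linarith [mem_Ioi.1 ht])
    have hp : exp (-t) ^ (2 * K) ≤ 1 := pow_le_one₀ (exp_pos _).le hx
    have hp0 : 0 < exp (-t) ^ (2 * K) := by positivity
    rw [norm_eq_abs, abs_of_nonneg (mul_nonneg h0 (by linarith))]
    exact (mul_le_of_le_one_right h0 (by linarith)).trans h1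
  · filter_upwards [ae_restrict_mem measurableSet_Ioi] with t ht
    have hx : exp (-t) < 1 := exp_lt_one_iff.2 (by linarith [mem_Ioi.1 ht])
    have hx2 : exp (-t) ^ 2 < 1 := pow_lt_one₀ (exp_pos _).le hx two_ne_zero
    have := tendsto_pow_atTop_nhds_zero_of_lt_one (by positivity) hx2
    simp_rw [pow_mul]
    simpa using (this.const_sub 1).const_mul
      (exp (-t) * (1 - exp (-t)) / (1 + exp (-t)) * t⁻¹)

/-- The derivative of `Γ` at `1`, computed under the integral sign. -/
lemma integral_log_mul_exp_neg :
    ∫ t in Ioi (0 : ℝ), log t * exp (-t) = -eulerMascheroniConstant := by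
  have h1 := Complex.hasDerivAt_GammaIntegral (s := 1) (by simp)
  have h2 : HasDerivAt Complex.GammaIntegral (-eulerMascheroniConstant : ℂ) 1 := by
    refine Complex.hasDerivAt_Gamma_one.congr_of_eventuallyEq ?_
    have ho : IsOpen {s : ℂ | 0 < s.re} := isOpen_lt continuous_const Complex.continuous_re
    filter_upwards [ho.mem_nhds (show (1 : ℂ) ∈ {s : ℂ | 0 < s.re} by simp)] with s hs
    exact (Complex.Gamma_eq_integral hs).symm
  have h := h1.unique h2
  simp only [sub_self, Complex.cpow_zero, one_mul, ← Complex.ofReal_mul, ← Complex.ofReal_neg,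
    integral_complex_ofReal] at h
  exact_mod_cast h

lemma integrableOn_log_mul_exp_neg :
    IntegrableOn (fun t : ℝ => log t * exp (-t)) (Ioi 0) := by
  -- A nonzero Bochner integral forces integrability.
  refine Integrable.of_integral_ne_zero ?_
  rw [integral_log_mul_exp_neg]
  linarith [one_half_lt_eulerMascheroniConstant]

lemma integrableOn_exp_neg_sub_one_mul_inv :
    IntegrableOn (fun t : ℝ => (exp (-t) - 1) * t⁻¹) (Ioc 0 1) := by
  refine Integrable.mono' (g := fun _ => (1 : ℝ)) (by simp)
    (Measurable.aestronglyMeasurable (by fun_prop)) ?_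
  filter_upwards [ae_restrict_mem measurableSet_Ioc] with t ht
  obtain ⟨h0, h1⟩ := one_sub_exp_neg_mul_inv_mem ht.1
  rw [norm_eq_abs, abs_le]
  constructor <;> nlinarith

lemma integrableOn_exp_neg_mul_inv :
    IntegrableOn (fun t : ℝ => exp (-t) * t⁻¹) (Ioi 1) := by
  refine Integrable.mono' (integrableOn_exp_neg_Ioi 1)
    (Measurable.aestronglyMeasurable (by fun_prop)) ?_
  filter_upwards [ae_restrict_mem measurableSet_Ioi] with t ht
  have ht1 : 1 < t := ht
  rw [norm_eq_abs, abs_of_nonneg (by positivity)]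
  exact mul_le_of_le_one_right (exp_pos _).le (inv_le_one_of_one_le₀ ht1.le)

lemma hasDerivAt_exp_neg_sub_mul_log (c : ℝ) {t : ℝ} (ht : 0 < t) :
    HasDerivAt (fun t => (exp (-t) - c) * log t)
      ((exp (-t) - c) * t⁻¹ - log t * exp (-t)) t := by
  have h := (((hasDerivAt_neg t).exp).sub_const c).mul (hasDerivAt_log ht.ne')
  refine h.congr_deriv ?_
  ring

/-- The boundary term `(exp (-t) - 1) * log t` vanishes at both ends of `(0, 1]`. -/
lemma integral_Ioc_by_parts :
    ∫ t in Ioc (0 : ℝ) 1, (exp (-t) - 1) * t⁻¹ = ∫ t in Ioc (0 : ℝ) 1, log t * exp (-t) := by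
  have hI1 := integrableOn_exp_neg_sub_one_mul_inv
  have hI2 := integrableOn_log_mul_exp_neg.mono_set (Ioc_subset_Ioi_self : Ioc (0 : ℝ) 1 ⊆ Ioi 0)
  have h0 : Tendsto (fun t : ℝ => (exp (-t) - 1) * log t) (𝓝[>] 0) (𝓝 0) := by
    have hl := tendsto_log_mul_rpow_nhdsGT_zero zero_lt_one
    rw [tendsto_zero_iff_abs_tendsto_zero] at hl ⊢
    refine tendsto_of_tendsto_of_tendsto_of_le_of_le' tendsto_const_nhds hl
      (Eventually.of_forall fun t => abs_nonneg _) ?_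
    filter_upwards [self_mem_nhdsWithin] with t ht
    have ht0 : 0 < t := ht
    have hx : exp (-t) ≤ 1 := exp_le_one_iff.2 (by linarith)
    have h2 := add_one_le_exp (-t)
    simp only [Function.comp_apply, rpow_one, abs_mul, abs_of_pos ht0]
    rw [mul_comm]
    refine mul_le_mul_of_nonneg_left ?_ (abs_nonneg _)
    rw [abs_le]
    constructor <;> linarith
  have h1 : Tendsto (fun t : ℝ => (exp (-t) - 1) * log t) (𝓝[<] 1) (𝓝 0) := by
    have := (hasDerivAt_exp_neg_sub_mul_log 1 one_pos).continuousAt.tendsto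
    simp only [log_one, mul_zero] at this
    exact this.mono_left nhdsWithin_le_nhds
  have h := intervalIntegral.integral_eq_sub_of_hasDerivAt_of_tendsto one_pos
    (fun t ht => hasDerivAt_exp_neg_sub_mul_log 1 ht.1)
    ((intervalIntegrable_iff_integrableOn_Ioc_of_le zero_le_one).2 (hI1.sub hI2)) h0 h1
  rw [intervalIntegral.integral_of_le zero_le_one, integral_sub hI1 hI2] at h
  linarith

/-- The boundary term `exp (-t) * log t` vanishes at `1` and at `∞`. -/
lemma integral_Ioi_by_parts :
    ∫ t in Ioi (1 : ℝ), exp (-t) * t⁻¹ = ∫ t in Ioi (1 : ℝ), log t * exp (-t) := by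
  have hI1 := integrableOn_exp_neg_mul_inv
  have hI2 := integrableOn_log_mul_exp_neg.mono_set (Ioi_subset_Ioi (zero_le_one' ℝ))
  have hd : ∀ t ∈ Ici (1 : ℝ), HasDerivAt (fun t => exp (-t) * log t)
      (exp (-t) * t⁻¹ - log t * exp (-t)) t := fun t ht => by
    simpa using hasDerivAt_exp_neg_sub_mul_log 0 (one_pos.trans_le ht)
  have hlim : Tendsto (fun t : ℝ => exp (-t) * log t) atTop (𝓝 0) := by
    have hb := tendsto_pow_mul_exp_neg_atTop_nhds_zero 1
    refine tendsto_of_tendsto_of_tendsto_of_le_of_le' tendsto_const_nhds hb ?_ ?_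
    · filter_upwards [eventually_ge_atTop 1] with t ht
      exact mul_nonneg (exp_pos _).le (log_nonneg ht)
    · filter_upwards [eventually_ge_atTop 1] with t ht
      rw [pow_one, mul_comm]
      exact mul_le_mul_of_nonneg_right (log_le_self (by linarith)) (exp_pos _).le
  have h := integral_Ioi_of_hasDerivAt_of_tendsto' hd (hI1.sub hI2) hlim
  rw [integral_sub hI1 hI2] at h
  simp only [log_one, mul_zero, sub_zero] at h
  linarith

lemma integral_exp_neg_regularized :
    (∫ t in Ioc (0 : ℝ) 1, (exp (-t) - 1) * t⁻¹) + ∫ t in Ioi (1 : ℝ), exp (-t) * t⁻¹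
      = -eulerMascheroniConstant := by
  have hI := integrableOn_log_mul_exp_neg
  rw [integral_Ioc_by_parts, integral_Ioi_by_parts, ← integral_log_mul_exp_neg,
    ← Ioc_union_Ioi_eq_Ioi (zero_le_one' ℝ),
    setIntegral_union (Ioc_disjoint_Ioi le_rfl) measurableSet_Ioi
      (hI.mono_set Ioc_subset_Ioi_self) (hI.mono_set (Ioi_subset_Ioi zero_le_one))]

theorem mellin_constant_integral_identity :
    (∫ t in Set.Ioc (0 : ℝ) 1, (2 * Real.exp (-t) / (1 + Real.exp (-t)) - 1) * t⁻¹)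
      + (∫ t in Set.Ioi (1 : ℝ), 2 * Real.exp (-t) / (t * (1 + Real.exp (-t))))
      = Real.log (π / 2) - Real.eulerMascheroniConstant := by
  have hR := integrableOn_remainder
  have hR1 := hR.mono_set (Ioc_subset_Ioi_self : Ioc (0 : ℝ) 1 ⊆ Ioi 0)
  have hR2 := hR.mono_set (Ioi_subset_Ioi (zero_le_one' ℝ))
  have e1 : ∫ t in Ioc (0 : ℝ) 1, (2 * exp (-t) / (1 + exp (-t)) - 1) * t⁻¹
      = (∫ t in Ioc (0 : ℝ) 1, (exp (-t) - 1) * t⁻¹)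
        + ∫ t in Ioc (0 : ℝ) 1, exp (-t) * (1 - exp (-t)) / (1 + exp (-t)) * t⁻¹ := by
    rw [← integral_add integrableOn_exp_neg_sub_one_mul_inv hR1]
    congr 1 with t
    have hx : 1 + exp (-t) ≠ 0 := by positivity
    rw [← add_mul]
    congr 1
    field_simp
    ring
  have e2 : ∫ t in Ioi (1 : ℝ), 2 * exp (-t) / (t * (1 + exp (-t)))
      = (∫ t in Ioi (1 : ℝ), exp (-t) * t⁻¹)
        + ∫ t in Ioi (1 : ℝ), exp (-t) * (1 - exp (-t)) / (1 + exp (-t)) * t⁻¹ := by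
    rw [← integral_add integrableOn_exp_neg_mul_inv hR2]
    congr 1 with t
    have hx : 1 + exp (-t) ≠ 0 := by positivity
    rw [← add_mul, mul_comm t, ← div_div, div_eq_mul_inv _ t]
    congr 1
    field_simp
    ring
  have e3 := integral_remainder
  rw [← Ioc_union_Ioi_eq_Ioi (zero_le_one' ℝ),
    setIntegral_union (Ioc_disjoint_Ioi le_rfl) measurableSet_Ioi hR1 hR2] at e3
  rw [e1, e2]
  linarith [integral_exp_neg_regularized]
end

section
/- As s → 0⁺ through real values, 2·Γ(s)·ζ(s)·(1 − 2^{1−s}) − 1/s converges to log(π/2) − γ, where γ is the Euler–Mascheroni constant. -/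
/-!
Since `s Γ(s) = Γ(s + 1)`, the expression equals `(F s - 1) / s` with
`F s = 2 Γ(s + 1) ζ(s) (1 - 2 ^ (1 - s))`. This `F` is differentiable at `0` with `F 0 = 1`
(because `ζ(0) = -1/2`), so the limit is `F' 0`. The product rule with `Γ'(1) = -γ` and
`ζ'(0) = -log (2π) / 2` gives `F' 0 = -γ + log (2π) - 2 log 2 = log (π / 2) - γ`.
-/

open scoped Real
open Filter

theorem hasDerivAt_regularized_zero :
    HasDerivAt
      (fun s : ℂ => 2 * Complex.Gamma (s + 1) * riemannZeta s * (1 - (2 : ℂ) ^ ((1 : ℂ) - s)))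
      ((Real.log (π / 2) - Real.eulerMascheroniConstant : ℝ) : ℂ) 0 := by
  have hG : HasDerivAt (fun s : ℂ => Complex.Gamma (s + 1))
      (-(Real.eulerMascheroniConstant : ℂ)) 0 :=
    HasDerivAt.comp_add_const (0 : ℂ) 1 (by simpa using Complex.hasDerivAt_Gamma_one)
  have hZ : HasDerivAt riemannZeta (-Complex.log (2 * π) / 2) 0 := by
    rw [← deriv_riemannZeta_zero]
    exact (differentiableAt_riemannZeta (by norm_num)).hasDerivAt
  have hP : HasDerivAt (fun s : ℂ => 1 - (2 : ℂ) ^ ((1 : ℂ) - s)) (2 * Complex.log 2) 0 := by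
    have h := (((hasDerivAt_id (0 : ℂ)).const_sub 1).const_cpow (c := 2)
      (Or.inl two_ne_zero)).const_sub 1
    simpa using h
  have hlog2 : Complex.log 2 = (Real.log 2 : ℂ) := by
    have h := Complex.ofReal_log (x := 2) (by norm_num)
    rw [h, Complex.ofReal_ofNat]
  have hlog2pi : Complex.log (2 * π) = (Real.log 2 + Real.log π : ℂ) := by
    have h := Complex.ofReal_log (x := 2 * π) (by positivity)
    rw [Real.log_mul two_ne_zero Real.pi_ne_zero] at h
    push_cast at h
    exact h.symm
  refine (((hG.const_mul 2).mul hZ).mul hP).congr_deriv ?_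
  rw [Real.log_div Real.pi_ne_zero two_ne_zero, hlog2, hlog2pi, riemannZeta_zero]
  simp only [zero_add, Complex.Gamma_one, sub_zero, Complex.cpow_one, Pi.mul_apply,
    riemannZeta_zero]
  push_cast
  ring

theorem mellin_constant_limit :
    Tendsto
      (fun s : ℝ =>
        2 * (Real.Gamma s : ℂ) * riemannZeta s * (1 - (2 : ℂ) ^ ((1 : ℂ) - s)) - 1 / (s : ℂ))
      (nhdsWithin 0 (Set.Ioi 0))
      (nhds ((Real.log (π / 2) - Real.eulerMascheroniConstant : ℝ) : ℂ)) := by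
  have h0 := hasDerivAt_regularized_zero
  rw [← Complex.ofReal_zero] at h0
  have h := h0.comp_ofReal.tendsto_slope_zero_right
  refine h.congr' ?_
  filter_upwards [self_mem_nhdsWithin] with s hs
  have hs0 : (s : ℂ) ≠ 0 := Complex.ofReal_ne_zero.mpr (ne_of_gt hs)
  simp only [zero_add, Complex.ofReal_zero, Complex.Gamma_one, sub_zero, Complex.cpow_one,
    riemannZeta_zero, Complex.real_smul, Complex.ofReal_inv, Complex.Gamma_add_one _ hs0,
    ← Complex.Gamma_ofReal]
  field_simp
  ring
end

section
/- There exists a constant C > 0 such that for all integers n ≥ 2, |Σ_{k_n < k ≤ K_n} 2·q_n^k/(k·(1 + q_n^k)) − log(K_n/k_n)| ≤ C·n^{−1/6}, where q_n = e^{−π/√(12n)}. -/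
/-!
Write `c = π / √(12 n)`, so that `q n ^ k = exp (-(c k))`. Since
`1 - 2y/(1+y) = (1-y)/(1+y)` lies between `0` and `1 - y ≤ -log y` for `0 < y ≤ 1`, each summand
differs from `1/k` by at most `c`. There are at most `n^(1/3)` summands, so replacing the sum by
the harmonic sum costs at most `c n^(1/3) ≤ n^(-1/6)`.
The harmonic sum over `a < k ≤ b` differs from `log (b/a)` by at most `1/a`
(`harmonic_Ioc_bounds`), and `1 / ⌊n^(1/5)⌋ ≤ 2 n^(-1/5) ≤ 2 n^(-1/6)`. Hence `C = 3` works.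
-/

open scoped BigOperators Real

/-- `kn n = ⌊n^(1/5)⌋`. -/
noncomputable def kn (n : ℕ) : ℕ := ⌊(n : ℝ) ^ ((1 : ℝ) / 5)⌋₊

/-- `Kn n = ⌊n^(1/3)⌋`. -/
noncomputable def Kn (n : ℕ) : ℕ := ⌊(n : ℝ) ^ ((1 : ℝ) / 3)⌋₊

/-- `q n = e^{−π/√(12n)}`. -/
noncomputable def q (n : ℕ) : ℝ := Real.exp (-π / Real.sqrt (12 * n))

/-- The lower error `1/a - 1/b` telescopes, which makes the induction on `b` work. -/
lemma harmonic_Ioc_bounds (a b : ℕ) (ha : 1 ≤ a) (hab : a ≤ b) :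
    ∑ k ∈ Finset.Ioc a b, (1 / (k : ℝ)) ≤ Real.log b - Real.log a ∧
      Real.log b - Real.log a - (1 / (a : ℝ) - 1 / b) ≤ ∑ k ∈ Finset.Ioc a b, (1 / (k : ℝ)) := by
  induction b, hab using Nat.le_induction with
  | base => simp
  | succ b hb ih =>
    obtain ⟨h1, h2⟩ := ih
    have hb0 : (0 : ℝ) < b := by exact_mod_cast (by omega : 0 < b)
    have hb1 : (0 : ℝ) < (b : ℝ) + 1 := by positivity
    have e1 := Real.one_sub_inv_le_log_of_pos (div_pos hb1 hb0)
    have e2 := Real.log_le_sub_one_of_pos (div_pos hb1 hb0)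
    rw [Real.log_div hb1.ne' hb0.ne'] at e1 e2
    have f1 : 1 - (((b : ℝ) + 1) / b)⁻¹ = 1 / ((b : ℝ) + 1) := by field_simp; ring
    have f2 : ((b : ℝ) + 1) / b - 1 = 1 / b := by field_simp; ring
    rw [f1] at e1
    rw [f2] at e2
    rw [Finset.sum_Ioc_succ_top (by omega)]
    push_cast
    constructor <;> linarith

lemma summand_bound (c : ℝ) (hc : 0 ≤ c) (k : ℕ) (hk : 0 < k) :
    |2 * Real.exp (-c) ^ k / (k * (1 + Real.exp (-c) ^ k)) - 1 / (k : ℝ)| ≤ c := by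
  have hk0 : (0 : ℝ) < k := by exact_mod_cast hk
  rw [← Real.exp_nat_mul]
  have hy : 0 < Real.exp (k * -c) := Real.exp_pos _
  have hy1 : Real.exp (k * -c) ≤ 1 := Real.exp_le_one_iff.2 (by nlinarith)
  have hy2 := Real.add_one_le_exp (k * -c)
  set y := Real.exp (k * -c)
  have e : 2 * y / (k * (1 + y)) - 1 / (k : ℝ) = -((1 - y) / (k * (1 + y))) := by
    field_simp; ring
  have h0 : 0 ≤ 1 - y := by linarith
  rw [e, abs_neg, abs_of_nonneg (by positivity), div_le_iff₀ (by positivity)]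
  have : 0 ≤ c * k * y := by positivity
  nlinarith

theorem intermediate_mean_estimate :
    ∃ C > (0 : ℝ), ∀ n : ℕ, 2 ≤ n →
      |(∑ k ∈ Finset.Ioc (kn n) (Kn n), 2 * q n ^ k / (k * (1 + q n ^ k)))
          - Real.log ((Kn n : ℝ) / (kn n))| ≤ C * (n : ℝ) ^ (-(1 / 6) : ℝ) := by
  refine ⟨3, by norm_num, fun n hn => ?_⟩
  have hn1 : (1 : ℝ) ≤ n := by exact_mod_cast (by omega : 1 ≤ n)
  have hn0 : (0 : ℝ) < n := by linarith
  have ha : 1 ≤ kn n := Nat.le_floor (by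
    push_cast; exact Real.one_le_rpow hn1 (by norm_num))
  have hab : kn n ≤ Kn n := Nat.floor_le_floor
    (Real.rpow_le_rpow_of_exponent_le hn1 (by norm_num))
  have ha0 : (0 : ℝ) < kn n := by exact_mod_cast ha
  have hb0 : (0 : ℝ) < Kn n := by exact_mod_cast (by omega : 0 < Kn n)
  obtain ⟨h1, h2⟩ := harmonic_Ioc_bounds (kn n) (Kn n) ha hab
  rw [Real.log_div hb0.ne' ha0.ne']
  have hKb : (Kn n : ℝ) ≤ (n : ℝ) ^ ((1 : ℝ) / 3) := Nat.floor_le (by positivity)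
  have hka : (n : ℝ) ^ ((1 : ℝ) / 5) ≤ 2 * kn n := by
    have := Nat.lt_floor_add_one ((n : ℝ) ^ ((1 : ℝ) / 5))
    change _ < (kn n : ℝ) + 1 at this
    have : (1 : ℝ) ≤ kn n := by exact_mod_cast ha
    linarith
  have hinv : 1 / (kn n : ℝ) ≤ 2 * (n : ℝ) ^ (-(1 / 6) : ℝ) := by
    have e : (n : ℝ) ^ (-(1 / 5) : ℝ) ≤ (n : ℝ) ^ (-(1 / 6) : ℝ) :=
      Real.rpow_le_rpow_of_exponent_le hn1 (by norm_num)
    have e2 : 1 / (kn n : ℝ) ≤ 2 * (n : ℝ) ^ (-(1 / 5) : ℝ) := by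
      rw [Real.rpow_neg hn0.le, ← div_eq_mul_inv, div_le_div_iff₀ ha0 (by positivity)]
      linarith
    linarith
  set c : ℝ := π / Real.sqrt (12 * n) with hc
  have hc0 : 0 ≤ c := by positivity
  have hq : q n = Real.exp (-c) := by rw [q, hc, neg_div]
  -- `π ≤ √12` because `π < 3.15` and `3.15 ^ 2 < 12`.
  have hcb : c ≤ (n : ℝ) ^ (-(1 / 2) : ℝ) := by
    have hs : π ≤ Real.sqrt 12 := Real.le_sqrt_of_sq_le (by
      nlinarith [Real.pi_lt_d2, Real.pi_pos])
    rw [hc, Real.rpow_neg hn0.le, ← Real.sqrt_eq_rpow, Real.sqrt_mul (by norm_num),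
      ← one_div, div_le_div_iff₀ (by positivity) (by positivity)]
    nlinarith [Real.sqrt_nonneg (n : ℝ)]
  have hsum : |(∑ k ∈ Finset.Ioc (kn n) (Kn n), 2 * q n ^ k / (k * (1 + q n ^ k)))
      - ∑ k ∈ Finset.Ioc (kn n) (Kn n), (1 / (k : ℝ))| ≤ (n : ℝ) ^ (-(1 / 6) : ℝ) := by
    rw [← Finset.sum_sub_distrib, hq]
    calc _ ≤ ∑ k ∈ Finset.Ioc (kn n) (Kn n), c :=
          (Finset.abs_sum_le_sum_abs _ _).trans (Finset.sum_le_sum fun k hk =>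
            summand_bound c hc0 k (by have := (Finset.mem_Ioc.1 hk).1; omega))
      _ ≤ Kn n * c := by
          rw [Finset.sum_const, Nat.card_Ioc, nsmul_eq_mul]
          gcongr
          exact Nat.sub_le _ _
      _ ≤ (n : ℝ) ^ ((1 : ℝ) / 3) * (n : ℝ) ^ (-(1 / 2) : ℝ) := by gcongr
      _ = _ := by rw [← Real.rpow_add hn0]; norm_num
  have hbpos : 0 < 1 / (Kn n : ℝ) := by positivity
  rw [abs_le] at hsum ⊢
  constructor <;> linarith [hsum.1, hsum.2]
end

section
/- There exists a constant C > 0 such that for all integers n ≥ 2, Σ_{k_n < k ≤ K_n} 4·q_n^k/(k²·(1 + q_n^k)²) ≤ C·n^{−1/5}, where q_n = e^{−π/√(12n)}. -/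
/-! Since `4 x ≤ (1 + x)²`, the `k`-th term is at most `1 / k²`, and the sum of `1 / k²` over
`k > kn n` telescopes to at most `1 / kn n`. As `n^(1/5) ≥ 1`, rounding down costs at most a
factor `2`, so `1 / kn n ≤ 2 n^(-1/5)` and `C = 2` works. -/

open scoped BigOperators Real

lemma variance_term_le (n k : ℕ) :
    4 * q n ^ k / ((k : ℝ) ^ 2 * (1 + q n ^ k) ^ 2) ≤ ((k : ℝ) ^ 2)⁻¹ := by
  have hx : 0 < q n ^ k := pow_pos (Real.exp_pos _) k
  generalize q n ^ k = x at hx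
  have h : 4 * x / (1 + x) ^ 2 ≤ 1 := by
    rw [div_le_one (by positivity)]
    nlinarith [sq_nonneg (x - 1)]
  calc 4 * x / ((k : ℝ) ^ 2 * (1 + x) ^ 2)
      = ((k : ℝ) ^ 2)⁻¹ * (4 * x / (1 + x) ^ 2) := by
        rw [mul_comm ((k : ℝ) ^ 2), ← div_div, div_eq_mul_inv _ ((k : ℝ) ^ 2), mul_comm]
    _ ≤ ((k : ℝ) ^ 2)⁻¹ * 1 := by gcongr
    _ = _ := mul_one _

lemma sum_Ioc_inv_sq_le_inv {a : ℕ} (ha : a ≠ 0) (b : ℕ) :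
    ∑ k ∈ Finset.Ioc a b, ((k : ℝ) ^ 2)⁻¹ ≤ (a : ℝ)⁻¹ := by
  rcases le_total a b with h | h
  · have h1 := sum_Ioc_inv_sq_le_sub (α := ℝ) ha h
    have h2 : (0 : ℝ) ≤ (b : ℝ)⁻¹ := by positivity
    linarith
  · rw [Finset.Ioc_eq_empty_of_le h, Finset.sum_empty]
    positivity

theorem intermediate_variance_estimate :
    ∃ C > (0 : ℝ), ∀ n : ℕ, 2 ≤ n →
      (∑ k ∈ Finset.Ioc (kn n) (Kn n), 4 * q n ^ k / ((k : ℝ) ^ 2 * (1 + q n ^ k) ^ 2))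
        ≤ C * (n : ℝ) ^ (-(1 / 5) : ℝ) := by
  refine ⟨2, two_pos, fun n hn => ?_⟩
  have hn1 : (1 : ℝ) ≤ n := by exact_mod_cast (by omega : 1 ≤ n)
  have hy : (1 : ℝ) ≤ (n : ℝ) ^ ((1 : ℝ) / 5) := Real.one_le_rpow hn1 (by norm_num)
  have hk : 1 ≤ kn n := Nat.le_floor (by exact_mod_cast hy)
  have hk' : (1 : ℝ) ≤ kn n := by exact_mod_cast hk
  have hlt : (n : ℝ) ^ ((1 : ℝ) / 5) < kn n + 1 := Nat.lt_floor_add_one _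
  calc _ ≤ ∑ k ∈ Finset.Ioc (kn n) (Kn n), ((k : ℝ) ^ 2)⁻¹ :=
        Finset.sum_le_sum fun k _ => variance_term_le n k
    _ ≤ (kn n : ℝ)⁻¹ := sum_Ioc_inv_sq_le_inv (by omega) _
    _ ≤ ((n : ℝ) ^ ((1 : ℝ) / 5) / 2)⁻¹ := by
        apply inv_anti₀ (by linarith)
        linarith
    _ = 2 * (n : ℝ) ^ (-(1 / 5) : ℝ) := by
        rw [Real.rpow_neg (by linarith), inv_div, div_eq_mul_inv]
end

section
/- Fix δ with 0 < δ < 1/4 and fix any c with 0 < c < 1. There exists N ∈ ℕ such that for all n ≥ N and all nonnegative integers a, b with a ≥ n^{1/4+δ}, b ≥ n^{1/4+δ}, and |b/√n − L(a/√n)| > n^{−1/4+δ}, the number of distinct parts partitions λ of n satisfying Σ_{k ≤ a} X_k(λ) = b is at most d(n)·exp(−c·n^{δ}). -/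
/-!
Write `d(n)` for the number of distinct parts partitions of `n` and `x = 1/(A√n)`. The proof
compares a Chernoff upper bound for the count with a lower bound for `d(n)` that is sharp up to a
polynomial factor.

*Upper bound* (`chernoff`, `count_le`). For every real `u` the count is at most
`e^{nx - ub} ∏_{k ≤ a} (1 + e^u e^{-kx}) ∏_{k > a} (1 + e^{-kx})`, which is at most
`exp(nx + π²/(12x) + (e^u - 1) P - ub)`, where `P = ∑_{k ≤ a} e^{-kx}/(1 + e^{-kx})`. The bound
`∏ (1 + e^{-kx}) ≤ exp(π²/(12x))` follows from `∏ (1 + q^k) = ∏ (1 - q^{2i+1})⁻¹`, the logarithm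
series and `ζ(2) = π²/6`. The sum `P` is a Riemann sum that differs from `√n L(a/√n)` by at most
`1`. As `nx + π²/(12x) = 2√n/A`, the choice `u = ± n^{-1/4}` gives the bound
`exp(2√n/A - n^δ + O(1))`.

*Lower bound* (`distincts_lower`). By Euler's theorem `d(n)` also counts the partitions of `n` into
odd parts, and counting the total size of all of these gives
`n d(n) ≥ ∑_{m} ∑_{r odd} r d(n - rm)`. Strong induction on `n` then shows
`d(n) ≥ C (n+1)^{-400} e^{2√n/A}`: inserting the hypothesis, the right-hand side has main term
`∑_m 1/(2m²x²) = n`, all errors are `O(√n)`, and the factor `(n+1)^{-400}` yields a gain of order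
`√n` that outweighs them (`numeric_step`).

A polynomial factor is negligible against `e^{(1-c) n^δ}`, which gives the theorem.
-/

open scoped BigOperators Real

/-! ### A recursive inequality for partitions into odd parts -/

/-- Adding `m` copies of an odd part `d` injects the odd partitions of `n - dm` into those of `n` in
which `d` occurs at least `m` times. -/
lemma card_odds_sub_le {n d m : ℕ} (hd : Odd d) (h : d * m ≤ n) :
    (Nat.Partition.odds (n - d * m)).card ≤
      ((Nat.Partition.odds n).filter (fun lam => m ≤ lam.parts.count d)).card := by
  refine Finset.card_le_card_of_injOn
    (fun mu => (⟨mu.parts + Multiset.replicate m d, ?_, ?_⟩ : Nat.Partition n)) ?_ ?_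
  · intro i hi
    rcases Multiset.mem_add.1 hi with hi | hi
    · exact mu.parts_pos hi
    · rw [Multiset.eq_of_mem_replicate hi]; exact hd.pos
  · rw [Multiset.sum_add, mu.parts_sum, Multiset.sum_replicate, smul_eq_mul, mul_comm m d]
    omega
  · intro mu hmu
    simp only [Nat.Partition.odds, Nat.Partition.restricted, Finset.coe_filter, Finset.mem_univ,
      true_and, Set.mem_ofPred_eq, Finset.mem_filter, Multiset.mem_add] at hmu ⊢
    refine ⟨?_, by simp⟩
    rintro i (hi | hi)
    · exact hmu i hi
    · rw [Multiset.eq_of_mem_replicate hi]; exact Nat.not_even_iff_odd.2 hd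
  · intro mu _ nu _ hmn
    have := congrArg Nat.Partition.parts hmn
    exact Nat.Partition.ext (by simpa using this)

lemma sum_odd_mul_count_le {n : ℕ} (lam : Nat.Partition n) (s : Finset ℕ) :
    ∑ i ∈ s, (2 * i + 1) * lam.parts.count (2 * i + 1) ≤ n := by
  have hinj : Set.InjOn (fun i : ℕ => 2 * i + 1) s := by intro a _ b _ h; simpa using h
  have h1 : ∑ i ∈ s, (2 * i + 1) * lam.parts.count (2 * i + 1)
      = ∑ d ∈ s.image (fun i => 2 * i + 1), d * lam.parts.count d :=
    (Finset.sum_image (f := fun d => d * lam.parts.count d) hinj).symm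
  have h2 : n = ∑ d ∈ lam.parts.toFinset, d * lam.parts.count d := by
    conv_lhs => rw [← lam.parts_sum, Finset.sum_multiset_count]
    exact Finset.sum_congr rfl fun d _ => by rw [smul_eq_mul, mul_comm]
  rw [h1]
  conv_rhs => rw [h2]
  refine Finset.sum_le_sum_of_ne_zero fun d _ hd => ?_
  rw [Multiset.mem_toFinset, ← Multiset.count_ne_zero]
  exact fun h => hd (by rw [h, mul_zero])

/-- The total size of all partitions of `n` into odd parts, counted part by part. -/
lemma odds_recursion (n M : ℕ) :
    ∑ m ∈ Finset.Icc 1 M, ∑ i ∈ (Finset.range n).filter (fun i => (2 * i + 1) * m ≤ n),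
      (2 * i + 1) * (Nat.Partition.odds (n - (2 * i + 1) * m)).card
      ≤ n * (Nat.Partition.odds n).card := by
  calc _ ≤ ∑ m ∈ Finset.Icc 1 M, ∑ i ∈ Finset.range n, (2 * i + 1) *
          ((Nat.Partition.odds n).filter (fun lam => m ≤ lam.parts.count (2 * i + 1))).card := by
        refine Finset.sum_le_sum fun m _ => ?_
        refine le_trans (Finset.sum_le_sum fun i hi => ?_)
          (Finset.sum_le_sum_of_subset (Finset.filter_subset _ _))
        exact Nat.mul_le_mul_left _ (card_odds_sub_le ⟨i, rfl⟩ (Finset.mem_filter.1 hi).2)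
    _ = ∑ lam ∈ Nat.Partition.odds n, ∑ i ∈ Finset.range n, (2 * i + 1) *
          ((Finset.Icc 1 M).filter (fun m => m ≤ lam.parts.count (2 * i + 1))).card := by
        rw [Finset.sum_comm, Finset.sum_comm (s := Nat.Partition.odds n)]
        refine Finset.sum_congr rfl fun i _ => ?_
        rw [← Finset.mul_sum, ← Finset.mul_sum]
        simp only [Finset.card_filter]
        rw [Finset.sum_comm]
    _ ≤ ∑ lam ∈ Nat.Partition.odds n, n := by
        refine Finset.sum_le_sum fun lam _ => ?_
        refine le_trans (Finset.sum_le_sum fun i _ => Nat.mul_le_mul_left _ ?_)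
          (sum_odd_mul_count_le lam (Finset.range n))
        refine le_trans (Finset.card_le_card (t := Finset.Icc 1 (lam.parts.count (2 * i + 1))) ?_)
          (by simp)
        intro m hm
        simp only [Finset.mem_filter, Finset.mem_Icc] at hm ⊢
        exact ⟨hm.1.1, hm.2⟩
    _ = n * (Nat.Partition.odds n).card := by rw [Finset.sum_const, smul_eq_mul, mul_comm]

lemma card_odds_pos (n : ℕ) : 1 ≤ (Nat.Partition.odds n).card := by
  refine Finset.card_pos.2 ⟨⟨Multiset.replicate n 1, ?_, by simp⟩, ?_⟩
  · intro i hi; rw [Multiset.eq_of_mem_replicate hi]; exact one_pos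
  · simp only [Nat.Partition.odds, Nat.Partition.restricted, Finset.mem_filter, Finset.mem_univ,
      true_and]
    intro i hi; rw [Multiset.eq_of_mem_replicate hi]; decide

/-! ### Exponential sums over the odd integers -/

lemma hasSum_exp_odd {u : ℝ} (hu : 0 < u) :
    HasSum (fun i : ℕ => Real.exp (-(2 * i + 1) * u)) (1 / (2 * Real.sinh u)) := by
  have hr : Real.exp (-(2 * u)) < 1 := by rw [Real.exp_lt_one_iff]; linarith
  have h := (hasSum_geometric_of_lt_one (Real.exp_pos _).le hr).mul_left (Real.exp (-u))
  have hs : 0 < Real.sinh u := Real.sinh_pos_iff.2 hu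
  have e : (fun i : ℕ => Real.exp (-(2 * i + 1) * u)) =
      fun i : ℕ => Real.exp (-u) * Real.exp (-(2 * u)) ^ i := by
    funext i
    rw [← Real.exp_nat_mul, ← Real.exp_add]; congr 1; ring
  rw [e]
  have hv : 1 / (2 * Real.sinh u) = Real.exp (-u) * (1 - Real.exp (-(2 * u)))⁻¹ := by
    have h1 : Real.exp (-(2 * u)) = Real.exp (-u) ^ 2 := by
      rw [← Real.exp_nat_mul]; congr 1; push_cast; ring
    have h2 : Real.exp u = (Real.exp (-u))⁻¹ := by rw [Real.exp_neg, inv_inv]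
    have hy : 0 < Real.exp (-u) := Real.exp_pos _
    have hy1 : 1 - Real.exp (-u) ^ 2 ≠ 0 := by rw [← h1]; linarith
    rw [h1, Real.sinh_eq, h2]
    rw [Real.sinh_eq, h2] at hs
    generalize Real.exp (-u) = y at *
    field_simp
  rw [hv]
  exact h

lemma hasSum_odd_mul_exp {u : ℝ} (hu : 0 < u) :
    HasSum (fun i : ℕ => (2 * i + 1) * Real.exp (-(2 * i + 1) * u))
      (Real.cosh u / (2 * Real.sinh u ^ 2)) := by
  have hr : Real.exp (-(2 * u)) < 1 := by rw [Real.exp_lt_one_iff]; linarith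
  have hn : ‖Real.exp (-(2 * u))‖ < 1 := by rwa [Real.norm_of_nonneg (Real.exp_pos _).le]
  have h := ((hasSum_coe_mul_geometric_of_norm_lt_one hn).mul_left (2 * Real.exp (-u))).add
    ((hasSum_geometric_of_lt_one (Real.exp_pos _).le hr).mul_left (Real.exp (-u)))
  have e : (fun i : ℕ => (2 * i + 1) * Real.exp (-(2 * i + 1) * u)) =
      fun i : ℕ => 2 * Real.exp (-u) * (i * Real.exp (-(2 * u)) ^ i) +
        Real.exp (-u) * Real.exp (-(2 * u)) ^ i := by
    funext i
    have : Real.exp (-(2 * i + 1) * u) = Real.exp (-u) * Real.exp (-(2 * u)) ^ i := by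
      rw [← Real.exp_nat_mul, ← Real.exp_add]; congr 1; ring
    rw [this]; ring
  rw [e]
  have hv : Real.cosh u / (2 * Real.sinh u ^ 2) = 2 * Real.exp (-u) *
      (Real.exp (-(2 * u)) / (1 - Real.exp (-(2 * u))) ^ 2) +
      Real.exp (-u) * (1 - Real.exp (-(2 * u)))⁻¹ := by
    have h1 : Real.exp (-(2 * u)) = Real.exp (-u) ^ 2 := by
      rw [← Real.exp_nat_mul]; congr 1; push_cast; ring
    have h2 : Real.exp u = (Real.exp (-u))⁻¹ := by rw [Real.exp_neg, inv_inv]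
    have hy : 0 < Real.exp (-u) := Real.exp_pos _
    have hy1 : 1 - Real.exp (-u) ^ 2 ≠ 0 := by rw [← h1]; linarith
    rw [h1, Real.sinh_eq, Real.cosh_eq, h2]
    generalize Real.exp (-u) = y at *
    have h3 : y⁻¹ - y ≠ 0 := by
      intro h0; apply hy1; field_simp at h0; linarith
    field_simp
    ring
  rw [hv]
  exact h

/-- Equivalently `∑_{d odd} d e^{-du} ≥ 1/(2u²)` on `(0, 1]`, by `hasSum_odd_mul_exp`. -/
lemma sinh_sq_le {u : ℝ} (hu : 0 < u) (hu1 : u ≤ 1) :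
    Real.sinh u ^ 2 ≤ u ^ 2 * Real.cosh u := by
  have e1 := (abs_le.1 (Real.exp_bound (x := u) (by rw [abs_of_pos hu]; exact hu1)
    (n := 5) (by norm_num))).2
  have e2 := (abs_le.1 (Real.exp_bound (x := -u) (by rw [abs_neg, abs_of_pos hu]; exact hu1)
    (n := 5) (by norm_num))).1
  simp only [Finset.sum_range_succ, Finset.sum_range_zero, Nat.factorial, abs_neg,
    abs_of_pos hu] at e1 e2
  norm_num at e1 e2
  have hs : Real.sinh u ≤ u + u ^ 3 / 5 := by
    rw [Real.sinh_eq]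
    have : u ^ 5 ≤ u ^ 3 := pow_le_pow_of_le_one hu.le hu1 (by norm_num)
    have : 0 < u ^ 3 := by positivity
    nlinarith
  have hc : 1 + u ^ 2 / 2 ≤ Real.cosh u := by
    have h1 := Real.cosh_sq (u / 2)
    have h2 := Real.cosh_two_mul (u / 2)
    rw [mul_div_cancel₀ u two_ne_zero] at h2
    have h3 := Real.self_le_sinh_iff.2 (half_pos hu).le
    nlinarith
  have hs0 : 0 < Real.sinh u := Real.sinh_pos_iff.2 hu
  calc Real.sinh u ^ 2 ≤ (u + u ^ 3 / 5) ^ 2 := by gcongr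
    _ = u ^ 2 * (1 + u ^ 2 * (2 / 5 + u ^ 2 / 25)) := by ring
    _ ≤ u ^ 2 * (1 + u ^ 2 * (1 / 2)) := by
        have : u ^ 2 ≤ 1 := pow_le_one₀ hu.le hu1
        gcongr; linarith
    _ ≤ u ^ 2 * Real.cosh u := by gcongr; linarith

/-- The contribution of a fixed multiplicity to the recursion. The finite sum may be replaced by the
full series because the omitted terms are nonpositive; the three terms on the left bound the
series of `d e^{-du}`, `κ d² e^{-du}` and `B d³ e^{-du}` over odd `d`. -/
lemma inner_sum_ge {u κ B : ℝ} (hu : 0 < u) (hu1 : u ≤ 1) (hκ : 0 ≤ κ) (hB : 0 ≤ B)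
    (F : Finset ℕ)
    (hF : ∀ i : ℕ, i ∉ F → 1 + κ * (2 * i + 1) - B * (2 * i + 1) ^ 2 ≤ 0) :
    1 / (2 * u ^ 2) + κ / (2 * u ^ 3) - 48 * B / u ^ 4 ≤
      ∑ i ∈ F, (2 * i + 1) * Real.exp (-(2 * i + 1) * u) *
        (1 + κ * (2 * i + 1) - B * (2 * i + 1) ^ 2) := by
  have H := (((hasSum_odd_mul_exp hu).mul_left (1 + 2 * κ / u)).sub
    ((hasSum_exp_odd hu).mul_left (κ / u ^ 2))).sub
    ((hasSum_exp_odd (half_pos hu)).mul_left (48 * B / u ^ 3))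
  -- termwise: `d² ≥ 2d/u - 1/u²` and `d³ ≤ 48 u⁻³ exp(du/2)`
  have hle : ∀ i : ℕ, (1 + 2 * κ / u) * ((2 * i + 1) * Real.exp (-(2 * i + 1) * u)) -
      κ / u ^ 2 * Real.exp (-(2 * i + 1) * u) -
      48 * B / u ^ 3 * Real.exp (-(2 * i + 1) * (u / 2)) ≤
      (2 * i + 1) * Real.exp (-(2 * i + 1) * u) *
        (1 + κ * (2 * i + 1) - B * (2 * i + 1) ^ 2) := by
    intro i
    have hd : (0 : ℝ) < 2 * i + 1 := by positivity
    generalize (2 * (i : ℝ) + 1) = d at *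
    have h2 : 2 * d / u - 1 / u ^ 2 ≤ d ^ 2 := by
      have : d ^ 2 - (2 * d / u - 1 / u ^ 2) = (d - 1 / u) ^ 2 := by field_simp; ring
      nlinarith [sq_nonneg (d - 1 / u)]
    have h3 : d ^ 3 * Real.exp (-d * u) ≤ 48 / u ^ 3 * Real.exp (-d * (u / 2)) := by
      have e := Real.pow_div_factorial_le_exp (x := d * (u / 2)) (by positivity) 3
      have e2 : Real.exp (-d * (u / 2)) = Real.exp (-d * u) * Real.exp (d * (u / 2)) := by
        rw [← Real.exp_add]; congr 1; ring
      rw [e2]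
      have : d ^ 3 ≤ 48 / u ^ 3 * Real.exp (d * (u / 2)) := by
        calc d ^ 3 = 48 / u ^ 3 * ((d * (u / 2)) ^ 3 / (Nat.factorial 3 : ℕ)) := by
              simp only [Nat.factorial]; push_cast; field_simp; norm_num
          _ ≤ _ := by gcongr
      nlinarith [Real.exp_pos (-d * u)]
    have h2' := mul_le_mul_of_nonneg_left h2
      (mul_nonneg hκ (Real.exp_pos (-d * u)).le)
    have h3' := mul_le_mul_of_nonneg_left h3 hB
    have r1 : (1 + 2 * κ / u) * (d * Real.exp (-d * u)) - κ / u ^ 2 * Real.exp (-d * u) -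
      48 * B / u ^ 3 * Real.exp (-d * (u / 2)) = d * Real.exp (-d * u) +
      κ * Real.exp (-d * u) * (2 * d / u - 1 / u ^ 2) -
      B * (48 / u ^ 3 * Real.exp (-d * (u / 2))) := by ring
    rw [r1]
    nlinarith
  have hsum : (1 + 2 * κ / u) * (Real.cosh u / (2 * Real.sinh u ^ 2)) -
      κ / u ^ 2 * (1 / (2 * Real.sinh u)) -
      48 * B / u ^ 3 * (1 / (2 * Real.sinh (u / 2))) ≤ ∑ i ∈ F, (2 * i + 1) *
        Real.exp (-(2 * i + 1) * u) * (1 + κ * (2 * i + 1) - B * (2 * i + 1) ^ 2) := by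
    have h1 := sum_le_hasSum F (fun i hi => ?_) H.neg
    · rw [Finset.sum_neg_distrib] at h1
      exact le_trans (neg_le_neg_iff.1 h1) (Finset.sum_le_sum fun i _ => hle i)
    · rw [neg_nonneg]
      refine le_trans (hle i) (mul_nonpos_of_nonneg_of_nonpos (by positivity) (hF i hi))
  refine le_trans ?_ hsum
  have hs0 : 0 < Real.sinh u := Real.sinh_pos_iff.2 hu
  have t0 : 1 / (2 * u ^ 2) ≤ Real.cosh u / (2 * Real.sinh u ^ 2) := by
    rw [div_le_div_iff₀ (by positivity) (by positivity)]
    nlinarith [sinh_sq_le hu hu1]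
  have t1 : 1 / (2 * Real.sinh u) ≤ 1 / (2 * u) := by
    have := Real.self_le_sinh_iff.2 hu.le
    gcongr
  have t2 : 1 / (2 * Real.sinh (u / 2)) ≤ 1 / u := by
    have := Real.self_le_sinh_iff.2 (half_pos hu).le
    exact one_div_le_one_div_of_le hu (by linarith)
  calc 1 / (2 * u ^ 2) + κ / (2 * u ^ 3) - 48 * B / u ^ 4
      = (1 + 2 * κ / u) * (1 / (2 * u ^ 2)) - κ / u ^ 2 * (1 / (2 * u)) -
        48 * B / u ^ 3 * (1 / u) := by field_simp; ring
    _ ≤ _ := by gcongr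

/-! ### The lower bound for the number of distinct parts partitions -/

lemma A_pos : 0 < A := by unfold A; positivity

lemma A_sq : A ^ 2 = 12 / π ^ 2 := by
  unfold A; rw [div_pow, Real.sq_sqrt (by norm_num)]

lemma sum_inv_sq_ge {M : ℕ} (hM : 1 ≤ M) :
    π ^ 2 / 6 - 1 / M ≤ ∑ m ∈ Finset.Icc 1 M, 1 / (m : ℝ) ^ 2 := by
  rw [sub_le_iff_le_add]
  refine hasSum_le_of_sum_le hasSum_zeta_two fun s => ?_
  obtain ⟨N, hN⟩ := s.exists_nat_subset_range
  have hsub : s ⊆ insert 0 (Finset.Icc 1 M ∪ Finset.Ioc M (max M N)) := by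
    intro i hi
    have := Finset.mem_range.1 (hN hi)
    simp only [Finset.mem_insert, Finset.mem_union, Finset.mem_Icc, Finset.mem_Ioc]
    omega
  refine (Finset.sum_le_sum_of_subset_of_nonneg hsub fun i _ _ => by positivity).trans ?_
  rw [Finset.sum_insert (by simp), Finset.sum_union (by
    rw [Finset.disjoint_left]; intro i; simp only [Finset.mem_Icc, Finset.mem_Ioc]; omega)]
  have h := sum_Ioc_inv_sq_le_sub (α := ℝ) (k := M) (by omega) (le_max_left M N)
  have h0 : (0 : ℝ) ≤ ((max M N : ℕ) : ℝ)⁻¹ := by positivity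
  simp only [one_div] at *
  simp only [Nat.cast_zero, ne_eq, OfNat.ofNat_ne_zero, not_false_eq_true, zero_pow, inv_zero,
    zero_add]
  linarith

lemma sqrt_sub_ge {n k : ℝ} (hn : 0 < n) (hk : 0 ≤ k) (hkn : k ≤ n) :
    √n - k / (2 * √n) - k ^ 2 / (2 * √n ^ 3) ≤ √(n - k) := by
  apply Real.le_sqrt_of_sq_le
  have hs : 0 < √n := Real.sqrt_pos.2 hn
  have hn2 : n = √n ^ 2 := (Real.sq_sqrt hn.le).symm
  generalize √n = s at *
  subst hn2
  obtain ⟨t, rfl⟩ : ∃ t, k = t * s ^ 2 := ⟨k / s ^ 2, by field_simp⟩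
  have hs2 : 0 < s ^ 2 := by positivity
  have ht0 : 0 ≤ t := nonneg_of_mul_nonneg_left hk hs2
  have ht1 : t ≤ 1 := by by_contra! h; nlinarith
  have e : s - t * s ^ 2 / (2 * s) - (t * s ^ 2) ^ 2 / (2 * s ^ 3)
      = s * (1 - t / 2 - t ^ 2 / 2) := by field_simp
  rw [e, mul_pow]
  have : (1 - t / 2 - t ^ 2 / 2) ^ 2 ≤ 1 - t := by
    have e2 : 1 - t - (1 - t / 2 - t ^ 2 / 2) ^ 2 = t ^ 2 * ((1 - t) * (3 + t)) / 4 := by ring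
    have : 0 ≤ t ^ 2 * ((1 - t) * (3 + t)) / 4 := by
      have : 0 ≤ 1 - t := by linarith
      positivity
    linarith
  nlinarith

/-- The comparison function `e^{2√j/A} (j+1)^{-400}` for the lower bound on `d(j)`, with the power
written as an exponential; note that `2/A = π/√3` is the growth rate of `d`. -/
noncomputable def lowerFun (j : ℕ) : ℝ := Real.exp (2 * √j / A - 400 * Real.log ((j : ℝ) + 1))

lemma lowerFun_pos (j : ℕ) : 0 < lowerFun j := Real.exp_pos _

/-- Expansion of `lowerFun (n - k)` to second order in `k`: the square root contributes
`-kx - k²/(A n^{3/2})` with `x = 1/(A√n)`, the polynomial factor contributes `+400k/(n+1)`. -/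
lemma lowerFun_sub_ge {n k : ℕ} (hn : 0 < n) (hk : k ≤ n) :
    lowerFun n * (Real.exp (-k * (1 / (A * √n))) *
      (1 + 400 / ((n : ℝ) + 1) * k - 1 / (A * √n ^ 3) * (k : ℝ) ^ 2)) ≤ lowerFun (n - k) := by
  have hA := A_pos
  have hn' : (0 : ℝ) < n := by exact_mod_cast hn
  have hk' : (k : ℝ) ≤ n := by exact_mod_cast hk
  have hs : 0 < √(n : ℝ) := Real.sqrt_pos.2 hn'
  have h1 := sqrt_sub_ge hn' (Nat.cast_nonneg k) hk'
  have hpos : 0 < (n : ℝ) - k + 1 := by linarith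
  have h2 : Real.log ((n : ℝ) - k + 1) ≤ Real.log ((n : ℝ) + 1) - k / ((n : ℝ) + 1) := by
    have h3 := Real.log_le_sub_one_of_pos (x := ((n : ℝ) - k + 1) / (n + 1)) (by positivity)
    rw [Real.log_div hpos.ne' (by positivity)] at h3
    have e : ((n : ℝ) - k + 1) / (n + 1) - 1 = -(k / ((n : ℝ) + 1)) := by field_simp; ring
    linarith
  have h4 : 2 * √(n : ℝ) / A - k * (1 / (A * √n)) - 1 / (A * √n ^ 3) * (k : ℝ) ^ 2
      ≤ 2 * √((n : ℝ) - k) / A := by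
    calc _ = 2 * (√n - k / (2 * √n) - (k : ℝ) ^ 2 / (2 * √(n : ℝ) ^ 3)) / A := by
          field_simp
      _ ≤ _ := by gcongr
  have h5 : 400 / ((n : ℝ) + 1) * k = 400 * (k / ((n : ℝ) + 1)) := by ring
  have h6 := Real.add_one_le_exp
    (400 / ((n : ℝ) + 1) * k - 1 / (A * √n ^ 3) * (k : ℝ) ^ 2)
  calc _ ≤ lowerFun n * (Real.exp (-k * (1 / (A * √n))) *
        Real.exp (400 / ((n : ℝ) + 1) * k - 1 / (A * √n ^ 3) * (k : ℝ) ^ 2)) := by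
        have := lowerFun_pos n
        gcongr
        linarith
    _ ≤ _ := by
        unfold lowerFun
        rw [Nat.cast_sub hk, ← Real.exp_add, ← Real.exp_add, Real.exp_le_exp]
        linarith

/-- The numerical inequality behind the inductive step. With `n = 1/(A²x²) = π²/(12x²)`, the
`1/x` gain coming from the polynomial factor of `lowerFun` beats all errors of order `1/x`. -/
lemma numeric_step {n x S : ℝ} (hx : 0 < x) (hx2 : x ≤ 1 / 2) (hn1 : 1 ≤ n)
    (hn : n = π ^ 2 / (12 * x ^ 2)) (hS : π ^ 2 / 6 - 2 * x ≤ S) :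
    n ≤ S * (1 / (2 * x ^ 2) + 400 / (n + 1) / (2 * x ^ 3) - 48 * (A ^ 2 * x ^ 3) / x ^ 4) := by
  have hpi := Real.pi_gt_three
  have hpi2 := Real.pi_lt_d2
  have hP : 9 < π ^ 2 := by nlinarith
  have hP2 : π ^ 2 < 10 := by nlinarith
  have h1 : 200 / n ≤ 400 / (n + 1) := by
    rw [div_le_div_iff₀ (by linarith) (by linarith)]; linarith
  have h2 : 1 / (2 * x ^ 2) + 60 / x ≤
      1 / (2 * x ^ 2) + 400 / (n + 1) / (2 * x ^ 3) - 48 * (A ^ 2 * x ^ 3) / x ^ 4 := by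
    have e1 : 200 / n / (2 * x ^ 3) ≤ 400 / (n + 1) / (2 * x ^ 3) := by gcongr
    have e2 : 200 / n / (2 * x ^ 3) - 48 * (A ^ 2 * x ^ 3) / x ^ 4 = 624 / π ^ 2 / x := by
      rw [hn, A_sq]; field_simp; norm_num
    have e3 : 60 / x ≤ 624 / π ^ 2 / x := by
      gcongr
      rw [le_div_iff₀ (by positivity)]; linarith
    linarith
  have h3 : n ≤ (π ^ 2 / 6 - 2 * x) * (1 / (2 * x ^ 2) + 60 / x) := by
    have e : (π ^ 2 / 6 - 2 * x) * (1 / (2 * x ^ 2) + 60 / x) =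
        n + (10 * π ^ 2 - 1 - 120 * x) / x := by rw [hn]; field_simp; ring
    rw [e]
    have : 0 ≤ (10 * π ^ 2 - 1 - 120 * x) / x := div_nonneg (by nlinarith) hx.le
    linarith
  refine h3.trans ?_
  have : 0 ≤ π ^ 2 / 6 - 2 * x := by linarith
  calc _ ≤ S * (1 / (2 * x ^ 2) + 60 / x) := by gcongr
    _ ≤ _ := by gcongr; linarith

/-- Beyond `k = s² = n` the correction factor is nonpositive, so that the recursion may be summed
over all `k` without truncation. -/
lemma bracket_nonpos {s k : ℝ} (hs : 0 < s) (hs401 : 401 * A ≤ s) (hn1 : 1 ≤ s ^ 2)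
    (hk : s ^ 2 ≤ k) : 1 + 400 / (s ^ 2 + 1) * k - 1 / (A * s ^ 3) * k ^ 2 ≤ 0 := by
  have hA := A_pos
  have hkpos : 0 < k := by linarith
  have b1 : 400 / (s ^ 2 + 1) * k ≤ 400 * (k / s ^ 2) := by
    rw [mul_div_assoc', div_mul_eq_mul_div]
    gcongr; linarith
  have b0 : 1 ≤ k / s ^ 2 := by rw [le_div_iff₀ (by linarith)]; linarith
  have b2 : 401 * (k / s ^ 2) ≤ 1 / (A * s ^ 3) * k ^ 2 := by
    have h1 : 1 / (A * s ^ 3) * k ^ 2 = (s / A) * (k / s ^ 2) * (k / s ^ 2) := by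
      field_simp
    rw [h1]
    have h2 : 401 ≤ s / A := by rwa [le_div_iff₀ hA]
    have h3 : 401 * 1 ≤ (s / A) * (k / s ^ 2) := by gcongr
    nlinarith
  linarith

/-- The inductive step of the lower bound. -/
lemma odds_step {n : ℕ} {C : ℝ} (hC : 0 < C) (hn : (401 * A) ^ 2 + (2 / A) ^ 2 + 1 ≤ n)
    (ih : ∀ j < n, C * lowerFun j ≤ (Nat.Partition.odds j).card) :
    C * lowerFun n ≤ (Nat.Partition.odds n).card := by
  have hA := A_pos
  have hn1 : (1 : ℝ) ≤ n := by nlinarith [sq_nonneg (401 * A), sq_nonneg (2 / A)]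
  have hn0 : 0 < n := by exact_mod_cast (by linarith : (0 : ℝ) < n)
  set s := √(n : ℝ) with hsdef
  have hs : 0 < s := Real.sqrt_pos.2 (by linarith)
  have hs2 : s ^ 2 = n := Real.sq_sqrt (by linarith)
  have hs401 : 401 * A ≤ s := Real.le_sqrt_of_sq_le (by nlinarith [sq_nonneg (2 / A)])
  have hs2A : 2 / A ≤ s := Real.le_sqrt_of_sq_le (by nlinarith [sq_nonneg (401 * A)])
  set x := 1 / (A * s) with hxdef
  have hx : 0 < x := by positivity
  have hx2 : x ≤ 1 / 2 := by
    apply one_div_le_one_div_of_le two_pos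
    rwa [div_le_iff₀ hA, mul_comm] at hs2A
  have hnx : (n : ℝ) = π ^ 2 / (12 * x ^ 2) := by
    have := A_sq
    rw [← hs2, hxdef]
    have : π ^ 2 = 12 / A ^ 2 := by rw [this]; field_simp
    rw [this]; field_simp
  have hBx : 1 / (A * s ^ 3) = A ^ 2 * x ^ 3 := by rw [hxdef]; field_simp
  set M := ⌊1 / x⌋₊ with hM
  have hMx : (M : ℝ) ≤ 1 / x := Nat.floor_le (by positivity)
  have hM1 : 1 / x < M + 1 := Nat.lt_floor_add_one _
  have h2x : 2 ≤ 1 / x := by rw [le_div_iff₀ hx]; linarith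
  have hM1' : 1 ≤ M := by
    have : (0 : ℝ) < M := by linarith
    exact_mod_cast this
  have hMinv : 1 / (M : ℝ) ≤ 2 * x := by
    have hMpos : (0 : ℝ) < M := by exact_mod_cast hM1'
    rw [div_le_iff₀ hMpos]
    have : 1 / x ≤ 2 * M := by linarith
    rw [div_le_iff₀ hx] at this
    linarith
  have hS := sum_inv_sq_ge hM1'
  have key := numeric_step hx hx2 hn1 hnx (S := ∑ m ∈ Finset.Icc 1 M, 1 / (m : ℝ) ^ 2)
    (by linarith)
  -- each `m` contributes at least `1/m²` times the same quantity
  have hm : ∀ m ∈ Finset.Icc 1 M, C * lowerFun n * (1 / (m : ℝ) ^ 2 *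
      (1 / (2 * x ^ 2) + 400 / ((n : ℝ) + 1) / (2 * x ^ 3) - 48 * (A ^ 2 * x ^ 3) / x ^ 4)) ≤
      ∑ i ∈ (Finset.range n).filter (fun i => (2 * i + 1) * m ≤ n),
      (2 * (i : ℝ) + 1) * (Nat.Partition.odds (n - (2 * i + 1) * m)).card := by
    intro m hm
    obtain ⟨hm1, hmM⟩ := Finset.mem_Icc.1 hm
    have hmpos : (0 : ℝ) < m := by exact_mod_cast hm1
    have hmx : m * x ≤ 1 := by
      have : (m : ℝ) ≤ 1 / x := le_trans (by exact_mod_cast hmM) hMx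
      rwa [le_div_iff₀ hx] at this
    have hin := inner_sum_ge (u := m * x) (κ := 400 / ((n : ℝ) + 1) * m)
      (B := A ^ 2 * x ^ 3 * m ^ 2) (by positivity) hmx (by positivity) (by positivity)
      ((Finset.range n).filter (fun i => (2 * i + 1) * m ≤ n)) (fun i hi => by
        have hlt : n < (2 * i + 1) * m := by
          by_contra! h
          apply hi
          rw [Finset.mem_filter, Finset.mem_range]
          refine ⟨?_, h⟩
          nlinarith
        have hk : (n : ℝ) ≤ (2 * i + 1) * m := by exact_mod_cast hlt.le
        generalize hkk : (2 * (i : ℝ) + 1) * m = k at hk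
        have e : 1 + 400 / ((n : ℝ) + 1) * m * (2 * i + 1) -
            A ^ 2 * x ^ 3 * m ^ 2 * (2 * i + 1) ^ 2 =
            1 + 400 / ((n : ℝ) + 1) * k - 1 / (A * s ^ 3) * k ^ 2 := by
          rw [hBx, ← hkk]; ring
        rw [e]
        exact bracket_nonpos hs hs401 (hs2 ▸ hn1) (hs2 ▸ hk) |>.trans_eq' (by rw [hs2]))
    have e1 : 1 / (m : ℝ) ^ 2 *
        (1 / (2 * x ^ 2) + 400 / ((n : ℝ) + 1) / (2 * x ^ 3) - 48 * (A ^ 2 * x ^ 3) / x ^ 4) =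
        1 / (2 * (m * x) ^ 2) + 400 / ((n : ℝ) + 1) * m / (2 * (m * x) ^ 3) -
        48 * (A ^ 2 * x ^ 3 * m ^ 2) / (m * x) ^ 4 := by
      field_simp
    rw [e1]
    refine le_trans (mul_le_mul_of_nonneg_left hin
      (mul_pos hC (lowerFun_pos n)).le) ?_
    rw [Finset.mul_sum]
    refine Finset.sum_le_sum fun i hi => ?_
    have hle := (Finset.mem_filter.1 hi).2
    have h1 := lowerFun_sub_ge hn0 hle
    have h2 := ih (n - (2 * i + 1) * m) (Nat.sub_lt hn0 (by positivity))
    refine le_trans ?_ (mul_le_mul_of_nonneg_left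
      (le_trans (mul_le_mul_of_nonneg_left h1 hC.le) h2) (by positivity))
    rw [← hsdef, hBx]
    push_cast
    rw [← hxdef]
    apply le_of_eq
    have : -((2 * (i : ℝ) + 1) * m) * x = -(2 * i + 1) * (m * x) := by ring
    rw [this]; ring
  have hrec : (∑ m ∈ Finset.Icc 1 M,
      ∑ i ∈ (Finset.range n).filter (fun i => (2 * i + 1) * m ≤ n),
      (2 * (i : ℝ) + 1) * (Nat.Partition.odds (n - (2 * i + 1) * m)).card) ≤
      n * (Nat.Partition.odds n).card := by
    exact_mod_cast odds_recursion n M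
  have htot := (Finset.sum_le_sum hm).trans hrec
  rw [← Finset.mul_sum, ← Finset.sum_mul] at htot
  have : C * lowerFun n * n ≤ n * (Nat.Partition.odds n).card :=
    le_trans (mul_le_mul_of_nonneg_left key (mul_pos hC (lowerFun_pos n)).le) htot
  nlinarith

/-- `d(n)` is at least `e^{2√n/A}` up to a polynomial factor. -/
lemma distincts_lower : ∃ C : ℝ, 0 < C ∧
    ∀ n : ℕ, C * lowerFun n ≤ (Nat.Partition.distincts n).card := by
  obtain ⟨N, hN⟩ := exists_nat_ge ((401 * A) ^ 2 + (2 / A) ^ 2 + 1)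
  have hA := A_pos
  refine ⟨Real.exp (-(2 * √(N : ℝ) / A)), Real.exp_pos _, fun n => ?_⟩
  rw [← Nat.Partition.card_odds_eq_card_distincts]
  induction n using Nat.strong_induction_on with
  | _ n ih =>
    rcases lt_or_ge n N with h | h
    · have h1 : (1 : ℝ) ≤ (Nat.Partition.odds n).card := by exact_mod_cast card_odds_pos n
      refine le_trans ?_ h1
      have h2 : lowerFun n ≤ Real.exp (2 * √(N : ℝ) / A) := by
        unfold lowerFun
        have h3 : 0 ≤ Real.log ((n : ℝ) + 1) :=
          Real.log_nonneg (le_add_of_nonneg_left (Nat.cast_nonneg n))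
        have h4 : 2 * √(n : ℝ) / A ≤ 2 * √(N : ℝ) / A := by gcongr
        rw [Real.exp_le_exp]; linarith
      calc _ ≤ Real.exp (-(2 * √(N : ℝ) / A)) * Real.exp (2 * √(N : ℝ) / A) := by gcongr
        _ = 1 := by rw [← Real.exp_add]; simp
    · exact odds_step (Real.exp_pos _) (hN.trans (by exact_mod_cast h)) ih

/-! ### The generating function at `e^{-x}` -/

lemma prod_one_add_mul_prod_odd (q : ℝ) (N : ℕ) :
    (∏ k ∈ Finset.range N, (1 + q ^ (k + 1))) * (∏ i ∈ Finset.range N, (1 - q ^ (2 * i + 1))) *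
      (∏ j ∈ Finset.range N, (1 - q ^ (j + 1))) = ∏ j ∈ Finset.range (2 * N), (1 - q ^ (j + 1)) := by
  induction N with
  | zero => simp
  | succ N ih =>
    rw [show 2 * (N + 1) = 2 * N + 1 + 1 by ring]
    simp only [Finset.prod_range_succ, ← ih]
    ring

/-- A finite form of Euler's `∏ (1 + q^k) = ∏ (1 - q^{2i+1})⁻¹`. -/
lemma prod_one_add_le_inv {q : ℝ} (hq : 0 < q) (hq1 : q < 1) (N : ℕ) :
    ∏ k ∈ Finset.range N, (1 + q ^ (k + 1)) ≤ ∏ i ∈ Finset.range N, (1 - q ^ (2 * i + 1))⁻¹ := by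
  have hlt : ∀ j : ℕ, 0 < 1 - q ^ (j + 1) := fun j => by
    have : q ^ (j + 1) < 1 := pow_lt_one₀ hq.le hq1 (Nat.succ_ne_zero j)
    linarith
  have hB : 0 < ∏ j ∈ Finset.range N, (1 - q ^ (j + 1)) := Finset.prod_pos fun j _ => hlt j
  have hO : 0 < ∏ i ∈ Finset.range N, (1 - q ^ (2 * i + 1)) :=
    Finset.prod_pos fun i _ => hlt (2 * i)
  rw [Finset.prod_inv_distrib, ← one_div, le_div_iff₀ hO]
  refine le_of_mul_le_mul_right ?_ hB
  rw [prod_one_add_mul_prod_odd, one_mul]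
  rw [two_mul, Finset.prod_range_add]
  refine mul_le_of_le_one_right hB.le (Finset.prod_le_one (fun j _ => (hlt _).le) fun j _ => ?_)
  have : 0 < q ^ (N + j + 1) := by positivity
  linarith

/-- `∏ (1 + e^{-kx}) ≤ exp(π²/(12x))`. -/
lemma prod_one_add_exp_le {x : ℝ} (hx : 0 < x) (N : ℕ) :
    ∏ k ∈ Finset.range N, (1 + Real.exp (-x) ^ (k + 1)) ≤ Real.exp (π ^ 2 / (12 * x)) := by
  have hq : 0 < Real.exp (-x) := Real.exp_pos _
  have hq1 : Real.exp (-x) < 1 := by rw [Real.exp_lt_one_iff]; linarith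
  refine (prod_one_add_le_inv hq hq1 N).trans ?_
  have hlt : ∀ i : ℕ, Real.exp (-x) ^ (2 * i + 1) < 1 := fun i =>
    pow_lt_one₀ hq.le hq1 (Nat.succ_ne_zero _)
  have e : ∏ i ∈ Finset.range N, (1 - Real.exp (-x) ^ (2 * i + 1))⁻¹ =
      Real.exp (∑ i ∈ Finset.range N, -Real.log (1 - Real.exp (-x) ^ (2 * i + 1))) := by
    rw [Real.exp_sum]
    refine Finset.prod_congr rfl fun i _ => ?_
    rw [Real.exp_neg (Real.log _), Real.exp_log (by linarith [hlt i])]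
  rw [e, Real.exp_le_exp]
  have h1 : HasSum (fun m : ℕ => ∑ i ∈ Finset.range N,
      (Real.exp (-x) ^ (2 * i + 1)) ^ (m + 1) / ((m : ℝ) + 1))
      (∑ i ∈ Finset.range N, -Real.log (1 - Real.exp (-x) ^ (2 * i + 1))) :=
    hasSum_sum fun i _ => Real.hasSum_pow_div_log_of_abs_lt_one (by
      rw [abs_of_pos (by positivity)]; exact hlt i)
  have h2 : HasSum (fun m : ℕ => 1 / (((m + 1 : ℕ)) : ℝ) ^ 2) (π ^ 2 / 6) := by
    have := (hasSum_nat_add_iff' (f := fun n : ℕ => 1 / (n : ℝ) ^ 2) 1).2 hasSum_zeta_two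
    simpa using this
  have h3 := h2.mul_left (1 / (2 * x))
  have e3 : π ^ 2 / (12 * x) = 1 / (2 * x) * (π ^ 2 / 6) := by field_simp; norm_num
  rw [e3]
  refine hasSum_le (fun m => ?_) h1 h3
  have hu : 0 < ((m : ℝ) + 1) * x := by positivity
  have h4 : ∑ i ∈ Finset.range N, Real.exp (-(2 * i + 1) * (((m : ℝ) + 1) * x)) ≤
      1 / (2 * (((m : ℝ) + 1) * x)) :=
    (sum_le_hasSum _ (fun i _ => (Real.exp_pos _).le) (hasSum_exp_odd hu)).trans (by
      have := Real.self_le_sinh_iff.2 hu.le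
      gcongr)
  calc _ = (∑ i ∈ Finset.range N, Real.exp (-(2 * i + 1) * (((m : ℝ) + 1) * x))) /
        ((m : ℝ) + 1) := by
        rw [Finset.sum_div]
        refine Finset.sum_congr rfl fun i _ => ?_
        rw [← pow_mul, ← Real.exp_nat_mul]; congr 2; push_cast; ring
    _ ≤ 1 / (2 * (((m : ℝ) + 1) * x)) / ((m : ℝ) + 1) := by gcongr
    _ = _ := by push_cast; field_simp

/-! ### The Chernoff bound -/

lemma exp_mul_le_jensen {p t : ℝ} (hp : 0 ≤ p) (hp1 : p ≤ 1) :
    Real.exp (p * t) ≤ 1 - p + p * Real.exp t := by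
  have := convexOn_exp.2 (Set.mem_univ (0 : ℝ)) (Set.mem_univ t) (sub_nonneg.2 hp1) hp (by ring)
  simpa using this

/-- The occupation probability `p_k = e^{-kx}/(1+e^{-kx})` of the part `k` under the Boltzmann
measure of parameter `x`. -/
noncomputable def occ (x : ℝ) (k : ℕ) : ℝ := Real.exp (-(k * x)) / (1 + Real.exp (-(k * x)))

lemma occ_pos (x : ℝ) (k : ℕ) : 0 < occ x k := by unfold occ; positivity

lemma occ_le_one (x : ℝ) (k : ℕ) : occ x k ≤ 1 := by
  unfold occ
  rw [div_le_one (by positivity)]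
  linarith

/-- `k ↦ log(1 + e^{-kx})` is convex with derivative `-x p_k`, so its decrements lie between
`x p_{k+1}` and `x p_k`. -/
lemma occ_step (x : ℝ) (k : ℕ) :
    x * occ x (k + 1) ≤ Real.log (1 + Real.exp (-(k * x))) -
      Real.log (1 + Real.exp (-((k + 1 : ℕ) * x))) ∧
    Real.log (1 + Real.exp (-(k * x))) - Real.log (1 + Real.exp (-((k + 1 : ℕ) * x))) ≤
      x * occ x k := by
  have e : Real.exp (-(k * x)) = Real.exp (-((k + 1 : ℕ) * x)) * Real.exp x := by
    rw [← Real.exp_add]; congr 1; push_cast; ring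
  have e' : Real.exp (-((k + 1 : ℕ) * x)) = Real.exp (-(k * x)) * Real.exp (-x) := by
    rw [← Real.exp_add]; congr 1; push_cast; ring
  constructor
  · have h := exp_mul_le_jensen (t := x) (occ_pos x (k + 1)).le (occ_le_one x (k + 1))
    rw [← Real.log_div (by positivity) (by positivity), Real.le_log_iff_exp_le (by positivity),
      mul_comm]
    refine h.trans (le_of_eq ?_)
    unfold occ
    rw [e]; field_simp; ring
  · have h := exp_mul_le_jensen (t := -x) (occ_pos x k).le (occ_le_one x k)
    rw [← Real.log_div (by positivity) (by positivity), Real.log_le_iff_le_exp (by positivity)]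
    rw [show x * occ x k = -(occ x k * -x) by ring, Real.exp_neg (occ x k * -x),
      le_inv_comm₀ (by positivity) (Real.exp_pos _), inv_div]
    refine h.trans (le_of_eq ?_)
    rw [e']; unfold occ; field_simp; ring

/-- The expected number of parts of size at most `a` is within `1` of `√n L(a/√n)` when
`x = 1/(A√n)`. -/
lemma sum_occ_bounds {x : ℝ} (hx : 0 < x) (a : ℕ) :
    x * ∑ k ∈ Finset.Icc 1 a, occ x k ≤ Real.log 2 - Real.log (1 + Real.exp (-(a * x))) ∧
    Real.log 2 - Real.log (1 + Real.exp (-(a * x))) ≤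
      x * (∑ k ∈ Finset.Icc 1 a, occ x k + 1) := by
  have e : Real.log 2 - Real.log (1 + Real.exp (-(a * x))) = ∑ k ∈ Finset.range a,
      (Real.log (1 + Real.exp (-(k * x))) - Real.log (1 + Real.exp (-((k + 1 : ℕ) * x)))) := by
    rw [Finset.sum_range_sub' (fun k : ℕ => Real.log (1 + Real.exp (-(k * x))))]
    norm_num
  have e2 : ∑ k ∈ Finset.Icc 1 a, occ x k = ∑ k ∈ Finset.range a, occ x (k + 1) := by
    rw [Finset.range_eq_Ico, Finset.sum_Ico_add' (fun k => occ x k) 0 a 1]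
    rfl
  rw [e]
  constructor
  · rw [e2, Finset.mul_sum]
    exact Finset.sum_le_sum fun k _ => (occ_step x k).1
  · refine (Finset.sum_le_sum fun k _ => (occ_step x k).2).trans ?_
    rw [← Finset.mul_sum]
    gcongr
    have h1 := Finset.sum_range_succ' (occ x) a
    have h2 := Finset.sum_range_succ (occ x) a
    rw [e2]
    linarith [occ_pos x a, occ_le_one x 0]

/-- Chernoff bound: Markov's inequality for the weight `e^{-x|λ| + u b(λ)}`. -/
lemma chernoff {x : ℝ} (hx : 0 < x) (u : ℝ) (n a b : ℕ) :
    (((Nat.Partition.distincts n).filter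
      (fun lam => (∑ k ∈ Finset.Icc 1 a, X lam k) = b)).card : ℝ) ≤
      Real.exp (n * x + π ^ 2 / (12 * x) +
        ((Real.exp u - 1) * ∑ k ∈ Finset.Icc 1 a, occ x k - u * b)) := by
  set D := (Nat.Partition.distincts n).filter
      (fun lam => (∑ k ∈ Finset.Icc 1 a, X lam k) = b) with hD
  set w : ℕ → ℝ := fun k => Real.exp (-(k * x)) * (if k ≤ a then Real.exp u else 1) with hw
  have hw0 : ∀ k, 0 ≤ w k := fun k => by
    simp only [hw]; split_ifs <;> positivity
  have hweight : ∀ lam ∈ D, ∏ k ∈ lam.parts.toFinset, w k = Real.exp (u * b - n * x) := by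
    intro lam hlam
    obtain ⟨h1, h2⟩ := Finset.mem_filter.1 hlam
    have hnd : lam.parts.Nodup := (Finset.mem_filter.1 h1).2
    have hsum : ∑ k ∈ lam.parts.toFinset, (k : ℝ) = n := by
      have h3 : ∑ k ∈ lam.parts.toFinset, k = n := by
        conv_rhs => rw [← lam.parts_sum]
        rw [Finset.sum_multiset_count]
        refine Finset.sum_congr rfl fun k hk => ?_
        rw [Multiset.count_eq_one_of_mem hnd (Multiset.mem_toFinset.1 hk), one_smul]
      rw [← Nat.cast_sum, h3]
    have hcnt : ((lam.parts.toFinset.filter (fun k => k ≤ a)).card : ℝ) = b := by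
      rw [← h2]
      congr 1
      rw [Finset.card_eq_sum_ones]
      have : ∀ k ∈ lam.parts.toFinset.filter (fun k => k ≤ a), 1 = X lam k := fun k hk =>
        (Multiset.count_eq_one_of_mem hnd
          (Multiset.mem_toFinset.1 (Finset.mem_filter.1 hk).1)).symm
      rw [Finset.sum_congr rfl this]
      refine Finset.sum_subset (fun k hk => ?_) (fun k hk hk' => ?_)
      · obtain ⟨hk1, hk2⟩ := Finset.mem_filter.1 hk
        exact Finset.mem_Icc.2 ⟨lam.parts_pos (Multiset.mem_toFinset.1 hk1), hk2⟩
      · refine Multiset.count_eq_zero.2 fun hm => hk' ?_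
        exact Finset.mem_filter.2 ⟨Multiset.mem_toFinset.2 hm, (Finset.mem_Icc.1 hk).2⟩
    simp only [hw]
    rw [Finset.prod_mul_distrib, ← Real.exp_sum, Finset.prod_ite, Finset.prod_const,
      Finset.prod_const_one, mul_one, ← Real.exp_nat_mul, ← Real.exp_add, hcnt,
      Finset.sum_neg_distrib, ← Finset.sum_mul, hsum]
    congr 1; ring
  have hinj : Set.InjOn (fun lam : Nat.Partition n => lam.parts.toFinset) D := by
    intro l1 h1 l2 h2 h
    have n1 : l1.parts.Nodup := (Finset.mem_filter.1 (Finset.mem_filter.1 h1).1).2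
    have n2 : l2.parts.Nodup := (Finset.mem_filter.1 (Finset.mem_filter.1 h2).1).2
    apply Nat.Partition.ext
    have h' := congrArg Finset.val h
    simpa only [Multiset.toFinset_val, n1.dedup, n2.dedup] using h'
  have hmain : (D.card : ℝ) * Real.exp (u * b - n * x) ≤
      ∏ k ∈ Finset.Icc 1 (n + a), (1 + w k) := by
    calc (D.card : ℝ) * Real.exp (u * b - n * x)
        = ∑ lam ∈ D, ∏ k ∈ lam.parts.toFinset, w k := by
          rw [Finset.sum_congr rfl hweight, Finset.sum_const, nsmul_eq_mul]
      _ = ∑ S ∈ D.image (fun lam => lam.parts.toFinset), ∏ k ∈ S, w k :=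
          (Finset.sum_image (f := fun S => ∏ k ∈ S, w k) hinj).symm
      _ ≤ ∑ S ∈ (Finset.Icc 1 (n + a)).powerset, ∏ k ∈ S, w k := by
          refine Finset.sum_le_sum_of_subset_of_nonneg ?_
            (fun S _ _ => Finset.prod_nonneg fun k _ => hw0 k)
          intro S hS
          obtain ⟨lam, -, rfl⟩ := Finset.mem_image.1 hS
          refine Finset.mem_powerset.2 fun k hk => Finset.mem_Icc.2 ?_
          have hk' := Multiset.mem_toFinset.1 hk
          exact ⟨lam.parts_pos hk', (Nat.Partition.le_of_mem_parts hk').trans (by omega)⟩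
      _ = _ := (Finset.prod_one_add _).symm
  have hfac : ∀ k, 1 + w k ≤ (1 + Real.exp (-(k * x))) *
      (if k ≤ a then Real.exp ((Real.exp u - 1) * occ x k) else 1) := by
    intro k
    simp only [hw]
    split_ifs
    · have h := Real.add_one_le_exp ((Real.exp u - 1) * occ x k)
      calc 1 + Real.exp (-(k * x)) * Real.exp u
          = (1 + Real.exp (-(k * x))) * ((Real.exp u - 1) * occ x k + 1) := by
            unfold occ; field_simp; ring
        _ ≤ _ := by gcongr
    · simp
  have hG : ∏ k ∈ Finset.Icc 1 (n + a), (1 + Real.exp (-(k * x))) ≤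
      Real.exp (π ^ 2 / (12 * x)) := by
    have e2 : ∏ k ∈ Finset.Icc 1 (n + a), (1 + Real.exp (-(k * x))) =
        ∏ k ∈ Finset.range (n + a), (1 + Real.exp (-x) ^ (k + 1)) := by
      have : ∀ k : ℕ, Real.exp (-(k * x)) = Real.exp (-x) ^ k := fun k => by
        rw [← Real.exp_nat_mul]; congr 1; ring
      simp only [this]
      rw [Finset.range_eq_Ico,
        Finset.prod_Ico_add' (fun k => 1 + Real.exp (-x) ^ k) 0 (n + a) 1]
      rfl
    rw [e2]; exact prod_one_add_exp_le hx _
  have hI : ∏ k ∈ Finset.Icc 1 (n + a),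
      (if k ≤ a then Real.exp ((Real.exp u - 1) * occ x k) else 1) =
      Real.exp ((Real.exp u - 1) * ∑ k ∈ Finset.Icc 1 a, occ x k) := by
    rw [← Finset.prod_filter, Finset.mul_sum, Real.exp_sum]
    refine Finset.prod_congr ?_ fun _ _ => rfl
    ext k
    simp only [Finset.mem_filter, Finset.mem_Icc]
    omega
  have hprod : ∏ k ∈ Finset.Icc 1 (n + a), (1 + w k) ≤ Real.exp (π ^ 2 / (12 * x)) *
      Real.exp ((Real.exp u - 1) * ∑ k ∈ Finset.Icc 1 a, occ x k) := by
    refine (Finset.prod_le_prod (fun k _ => by linarith [hw0 k]) fun k _ => hfac k).trans ?_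
    rw [Finset.prod_mul_distrib, hI]
    gcongr
  have hfin := hmain.trans hprod
  rw [← le_div_iff₀ (Real.exp_pos _), ← Real.exp_add, ← Real.exp_sub] at hfin
  refine hfin.trans (le_of_eq ?_)
  congr 1; ring

/-- The saddle point choice `x = 1/(A√n)` combined with a tilt `u = ±n^{-1/4}`. -/
lemma count_le {δ : ℝ} {n : ℕ} (hn : 1 ≤ n) (a b : ℕ)
    (h : |(b : ℝ) / √n - L ((a : ℝ) / √n)| > (n : ℝ) ^ (-(1 / 4 : ℝ) + δ)) :
    (((Nat.Partition.distincts n).filter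
      (fun lam => (∑ k ∈ Finset.Icc 1 a, X lam k) = b)).card : ℝ) ≤
      Real.exp (2 * √n / A) * Real.exp (2 * A + 2 - (n : ℝ) ^ δ) := by
  have hA := A_pos
  have hnR : (1 : ℝ) ≤ n := by exact_mod_cast hn
  have hn0 : (0 : ℝ) < n := by linarith
  set s := √(n : ℝ) with hsdef
  have hs : 0 < s := Real.sqrt_pos.2 hn0
  have hs2 : s ^ 2 = n := Real.sq_sqrt hn0.le
  set x := 1 / (A * s) with hxdef
  have hx : 0 < x := by positivity
  have hxs : x * (A * s) = 1 := by rw [hxdef]; field_simp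
  set v := (n : ℝ) ^ (-(1 / 4 : ℝ)) with hv
  have hv0 : 0 < v := Real.rpow_pos_of_pos hn0 _
  have hv1 : v ≤ 1 := Real.rpow_le_one_of_one_le_of_nonpos hnR (by norm_num)
  have hvs : v ^ 2 * s = 1 := by
    rw [hv, hsdef, Real.sqrt_eq_rpow, ← Real.rpow_natCast, ← Real.rpow_mul hn0.le,
      ← Real.rpow_add hn0]
    norm_num
  have hvd : (n : ℝ) ^ (-(1 / 4 : ℝ) + δ) = v * (n : ℝ) ^ δ := Real.rpow_add hn0 _ _
  set P := ∑ k ∈ Finset.Icc 1 a, occ x k with hP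
  set Φ := s * L ((a : ℝ) / s) with hΦ
  have hP0 : 0 ≤ P := Finset.sum_nonneg fun k _ => (occ_pos x k).le
  have hΦx : x * Φ = Real.log 2 - Real.log (1 + Real.exp (-(a * x))) := by
    rw [hΦ, L, Real.log_div two_ne_zero (by positivity)]
    have : -((a : ℝ) / s) / A = -(a * x) := by rw [hxdef]; field_simp
    rw [this]
    calc _ = (x * (A * s)) * (Real.log 2 - Real.log (1 + Real.exp (-(a * x)))) := by ring
      _ = _ := by rw [hxs, one_mul]
  obtain ⟨b1, b2⟩ := sum_occ_bounds hx a
  rw [← hΦx] at b1 b2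
  have hPΦ : P ≤ Φ := le_of_mul_le_mul_left b1 hx
  have hΦP : Φ ≤ P + 1 := le_of_mul_le_mul_left b2 hx
  have hΦA : Φ ≤ 2 * A * s := by
    have h2 : Real.log 2 ≤ 2 := by have := Real.log_two_lt_d9; linarith
    have h3 : 0 ≤ Real.log (1 + Real.exp (-(a * x))) :=
      Real.log_nonneg (by linarith [Real.exp_pos (-(a * x))])
    refine le_of_mul_le_mul_left ?_ hx
    calc x * Φ ≤ 2 := by rw [hΦx]; linarith
      _ = x * (2 * A * s) := by rw [show x * (2 * A * s) = 2 * (x * (A * s)) by ring, hxs]; ring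
  have hv2P : v ^ 2 * P ≤ 2 * A := by
    calc v ^ 2 * P ≤ v ^ 2 * (2 * A * s) := by gcongr; linarith
      _ = 2 * A * (v ^ 2 * s) := by ring
      _ = 2 * A := by rw [hvs, mul_one]
  have hbase : n * x + π ^ 2 / (12 * x) = 2 * s / A := by
    have hpi : π ^ 2 = 12 / A ^ 2 := by rw [A_sq]; field_simp
    rw [hpi, ← hs2, hxdef]; field_simp; norm_num
  have hexp : ∀ u : ℝ, |u| = v → Real.exp u - 1 ≤ u + v ^ 2 := fun u hu => by
    have h1 := Real.abs_exp_sub_one_sub_id_le (x := u) (by rw [hu]; exact hv1)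
    have h2 := (abs_le.1 h1).2
    rw [← hu, sq_abs]; linarith
  have hdev : v * (n : ℝ) ^ δ * s < |(b : ℝ) - Φ| := by
    have e : (b : ℝ) - Φ = ((b : ℝ) / s - L ((a : ℝ) / s)) * s := by
      rw [hΦ]; field_simp
    rw [e, abs_mul, abs_of_pos hs]
    rw [hvd] at h
    gcongr
  have hdev' : (n : ℝ) ^ δ ≤ v * |(b : ℝ) - Φ| := by
    calc (n : ℝ) ^ δ = v * (v * (n : ℝ) ^ δ * s) := by
          rw [show v * (v * (n : ℝ) ^ δ * s) = (v ^ 2 * s) * (n : ℝ) ^ δ by ring, hvs, one_mul]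
      _ ≤ _ := by gcongr
  rw [← Real.exp_add]
  rcases le_total 0 ((b : ℝ) - Φ) with hb | hb
  · rw [abs_of_nonneg hb] at hdev'
    refine (chernoff hx v n a b).trans ?_
    rw [Real.exp_le_exp, hbase]
    have h1 := mul_le_mul_of_nonneg_right (hexp v (abs_of_pos hv0)) hP0
    have h2 := mul_le_mul_of_nonneg_left hPΦ hv0.le
    nlinarith
  · rw [abs_of_nonpos hb] at hdev'
    refine (chernoff hx (-v) n a b).trans ?_
    rw [Real.exp_le_exp, hbase]
    have h1 := mul_le_mul_of_nonneg_right (hexp (-v) (by rw [abs_neg, abs_of_pos hv0])) hP0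
    have h2 := mul_le_mul_of_nonneg_left hΦP hv0.le
    nlinarith

theorem saddle_point_count_bound (δ c : ℝ) (hδ0 : 0 < δ) (hδ : δ < 1 / 4)
    (hc0 : 0 < c) (hc : c < 1) :
    ∃ N : ℕ, ∀ n ≥ N, ∀ a b : ℕ,
      (n : ℝ) ^ ((1 : ℝ) / 4 + δ) ≤ (a : ℝ) →
      (n : ℝ) ^ ((1 : ℝ) / 4 + δ) ≤ (b : ℝ) →
      |(b : ℝ) / Real.sqrt n - L ((a : ℝ) / Real.sqrt n)| > (n : ℝ) ^ (-(1 / 4 : ℝ) + δ) →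
      (((Nat.Partition.distincts n).filter
            (fun lam => (∑ k ∈ Finset.Icc 1 a, X lam k) = b)).card : ℝ)
        ≤ ((Nat.Partition.distincts n).card : ℝ) * Real.exp (-c * (n : ℝ) ^ δ) := by
  obtain ⟨C, hC, hlow⟩ := distincts_lower
  -- eventually `(1 - c) n^δ` exceeds the logarithm of all polynomial losses
  have hev : ∀ᶠ n : ℕ in Filter.atTop,
      2 * A + 2 - Real.log C + 400 * Real.log ((n : ℝ) + 1) ≤ (1 - c) * (n : ℝ) ^ δ := by
    have hlog : ∀ᶠ y : ℝ in Filter.atTop, ‖Real.log y‖ ≤ (1 - c) / 1600 * ‖y ^ δ‖ :=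
      (isLittleO_log_rpow_atTop hδ0).bound (by linarith)
    have hbig : ∀ᶠ y : ℝ in Filter.atTop,
        (2 * A + 2 - Real.log C + 400 * Real.log 2) * (2 / (1 - c)) ≤ y ^ δ :=
      (tendsto_rpow_atTop hδ0).eventually_ge_atTop _
    have hnat := tendsto_natCast_atTop_atTop (R := ℝ)
    filter_upwards [hnat.eventually hlog, hnat.eventually hbig, Filter.eventually_ge_atTop 1]
      with n h1 h2 hn
    have hnR : (1 : ℝ) ≤ n := by exact_mod_cast hn
    have hpow : 0 ≤ (n : ℝ) ^ δ := by positivity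
    rw [Real.norm_of_nonneg (Real.log_nonneg hnR), Real.norm_of_nonneg hpow] at h1
    have h3 : Real.log ((n : ℝ) + 1) ≤ Real.log 2 + Real.log n := by
      rw [← Real.log_mul two_ne_zero (by linarith)]
      exact Real.log_le_log (by linarith) (by linarith)
    have hc' : 0 < 1 - c := by linarith
    rw [mul_div_assoc', div_le_iff₀ hc'] at h2
    nlinarith [mul_nonneg hc'.le hpow]
  obtain ⟨N, hN⟩ := Filter.eventually_atTop.1 hev
  refine ⟨max N 1, fun n hn a b _ _ h => ?_⟩
  have hn1 : 1 ≤ n := (le_max_right N 1).trans hn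
  have hfin := hN n ((le_max_left N 1).trans hn)
  refine (count_le hn1 a b h).trans ?_
  refine le_trans ?_ (mul_le_mul_of_nonneg_right (hlow n) (Real.exp_pos _).le)
  have hCe : C = Real.exp (Real.log C) := (Real.exp_log hC).symm
  rw [lowerFun, hCe, ← Real.exp_add, ← Real.exp_add, ← Real.exp_add, Real.exp_le_exp]
  nlinarith
end

section
/- There exists a constant C > 0 such that for all integers n ≥ 1, |Σ_{k=1}^∞ log(1 + e^{−k/(A√n)}) − √n/A| ≤ C, where A = √12/π (so that √n/A = π√n/√12). -/
/-!
The function `x ↦ log (1 + e^{-bx})`, with `b = 1/(A√n)`, is nonnegative and decreasing on `[0, ∞)`,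
so the integral test places the series between `∫₀^∞ log (1 + e^{-bx}) dx - log 2` and
`∫₀^∞ log (1 + e^{-bx}) dx`, where `log 2` is the term at `x = 0`. Expanding the logarithm in powers
of `e^{-x}` and integrating term by term gives `∫₀^∞ log (1 + e^{-x}) dx = ∑ (-1)^k / (k+1)^2 =
π²/12` (`integral_log_one_add_exp_neg`), hence the integral above is `A√n · π²/12 = √n/A`, because
`A² = 12/π²`. The constant `C = log 2` works.
-/

open scoped BigOperators Real

open MeasureTheory Set

/-- The value `η(2) = π²/12`, deduced from `ζ(2) = π²/6` by isolating the even terms. -/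
lemma hasSum_alternating_inv_sq :
    HasSum (fun k : ℕ => (-1 : ℝ) ^ k / ((k : ℝ) + 1) ^ 2) (π ^ 2 / 12) := by
  have hz := hasSum_zeta_two
  have heven : HasSum (fun n : ℕ => (1 + (-1 : ℝ) ^ n) / (n : ℝ) ^ 2) (π ^ 2 / 12) := by
    have hinj : Function.Injective (fun m : ℕ => 2 * m) := fun a b h => by
      simpa using h
    rw [← hinj.hasSum_iff]
    · convert! hz.mul_left (1 / 2) using 1
      · funext m
        simp only [Function.comp, pow_mul]
        push_cast
        by_cases hm : (m : ℝ) = 0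
        · simp [hm]
        · field_simp
          norm_num
      · ring
    · intro n hn
      have : Odd n := by
        rw [← Nat.not_even_iff_odd]
        rintro ⟨m, rfl⟩
        exact hn ⟨m, two_mul m⟩
      simp [this.neg_one_pow]
  have h := (hasSum_nat_add_iff' 1).2 (hz.sub heven)
  convert! h using 1
  · funext k
    push_cast
    rw [pow_succ]
    ring
  · simp
    ring

lemma integral_log_one_add_exp_neg :
    ∫ x in Ioi (0 : ℝ), Real.log (1 + Real.exp (-x)) = π ^ 2 / 12 := by
  have hneg (k : ℕ) : (-((k : ℝ) + 1)) < 0 := by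
    have : (0 : ℝ) ≤ k := k.cast_nonneg
    linarith
  have hint (k : ℕ) (c : ℝ) :
      ∫ x in Ioi (0 : ℝ), c / ((k : ℝ) + 1) * Real.exp (-((k : ℝ) + 1) * x)
        = c / ((k : ℝ) + 1) ^ 2 := by
    have := hneg k
    have h0 : (k : ℝ) + 1 ≠ 0 := by linarith
    rw [integral_const_mul, integral_exp_mul_Ioi this]
    simp only [mul_zero, Real.exp_zero]
    field_simp
  have key := hasSum_integral_of_summable_integral_norm (μ := volume.restrict (Ioi (0 : ℝ)))
    (F := fun (k : ℕ) (x : ℝ) => (-1) ^ k / ((k : ℝ) + 1) * Real.exp (-((k : ℝ) + 1) * x))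
    (fun k => (integrableOn_exp_mul_Ioi (hneg k) 0).const_mul _) (by
      have hn (k : ℕ) (x : ℝ) : ‖(-1) ^ k / ((k : ℝ) + 1) * Real.exp (-((k : ℝ) + 1) * x)‖
          = 1 / ((k : ℝ) + 1) * Real.exp (-((k : ℝ) + 1) * x) := by
        have : (0 : ℝ) < (k : ℝ) + 1 := by positivity
        rw [norm_mul, norm_div, norm_pow, norm_neg, norm_one, one_pow, Real.norm_of_nonneg this.le,
          Real.norm_of_nonneg (Real.exp_pos _).le]
      simp only [hn, hint]
      simpa using (summable_nat_add_iff 1).2 hasSum_zeta_two.summable)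
  simp only [hint] at key
  rw [← key.unique hasSum_alternating_inv_sq]
  refine setIntegral_congr_fun measurableSet_Ioi fun x hx => ?_
  have hlt : |-Real.exp (-x)| < 1 := by
    rw [abs_neg, abs_of_pos (Real.exp_pos _), Real.exp_lt_one_iff]
    exact neg_lt_zero.2 hx
  have hs := (Real.hasSum_pow_div_log_of_abs_lt_one hlt).neg
  simp only [sub_neg_eq_add, neg_neg] at hs
  rw [← hs.tsum_eq]
  refine tsum_congr fun k => ?_
  have : Real.exp (-((k : ℝ) + 1) * x) = Real.exp (-x) ^ (k + 1) := by
    rw [← Real.exp_nat_mul]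
    push_cast
    ring_nf
  rw [this, neg_pow, pow_succ (-1 : ℝ)]
  ring

/-- Comparison of the series with the integral; the two differ by at most the term at `0`. -/
lemma abs_tsum_log_sub_le {b : ℝ} (hb : 0 < b) :
    |(∑' k : ℕ, Real.log (1 + Real.exp (-(b * ((k : ℝ) + 1))))) - b⁻¹ * (π ^ 2 / 12)|
      ≤ Real.log 2 := by
  set f : ℝ → ℝ := fun x => Real.log (1 + Real.exp (-(b * x))) with hf
  have hanti : AntitoneOn f (Ici 0) := fun x _ y _ hxy => by
    simp only [hf]
    gcongr
  have hnonneg (x : ℝ) : 0 ≤ f x :=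
    Real.log_nonneg (by linarith [Real.exp_pos (-(b * x))])
  have hsum : Summable (fun k : ℕ => f k) := by
    refine Summable.of_nonneg_of_le (fun k => hnonneg k) (fun k => ?_)
      (Real.summable_exp_nat_mul_iff.2 (neg_lt_zero.2 hb))
    have := Real.log_le_sub_one_of_pos (x := 1 + Real.exp (-(b * k))) (by positivity)
    have he : (k : ℝ) * -b = -(b * k) := by ring
    rw [he]
    simp only [hf]
    linarith
  have hintble := hanti.integrableOn_Ioi_zero_of_summable hsum fun t _ => hnonneg t
  have hub := hanti.tsum_add_one_le_integral hintble fun t _ => hnonneg t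
  have hlb := hanti.integral_le_tsum hsum fun t _ => hnonneg t
  have hval : ∫ x in Ioi (0 : ℝ), f x = b⁻¹ * (π ^ 2 / 12) := by
    have := integral_comp_mul_left_Ioi (fun x : ℝ => Real.log (1 + Real.exp (-x))) 0 hb
    rwa [mul_zero, integral_log_one_add_exp_neg, smul_eq_mul] at this
  have hf0 : f 0 = Real.log 2 := by
    simp only [hf, mul_zero, neg_zero, Real.exp_zero]
    norm_num
  rw [hsum.tsum_eq_zero_add, Nat.cast_zero, hf0] at hlb
  push_cast at hub hlb
  rw [hval] at hub hlb
  change |(∑' k : ℕ, f ((k : ℝ) + 1)) - _| ≤ _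
  rw [abs_le]
  constructor <;> linarith [Real.log_nonneg (one_le_two (α := ℝ))]

theorem log_series_estimate :
    ∃ C > (0 : ℝ), ∀ n : ℕ, 1 ≤ n →
      |(∑' k : ℕ, Real.log (1 + Real.exp (-((k : ℝ) + 1) / (A * Real.sqrt n))))
          - Real.sqrt n / A| ≤ C := by
  refine ⟨Real.log 2, Real.log_pos one_lt_two, fun n hn => ?_⟩
  have hA : 0 < A := by
    unfold A
    positivity
  have hA2 : A ^ 2 = 12 / π ^ 2 := by
    rw [A, div_pow, Real.sq_sqrt (by norm_num)]
  have hs : 0 < Real.sqrt n := Real.sqrt_pos.2 (by exact_mod_cast hn)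
  have h := abs_tsum_log_sub_le (b := (A * Real.sqrt n)⁻¹) (by positivity)
  have hmain : (A * Real.sqrt n)⁻¹⁻¹ * (π ^ 2 / 12) = Real.sqrt n / A := by
    have : π ^ 2 / 12 = (A ^ 2)⁻¹ := by rw [hA2, inv_div]
    rw [this]
    field_simp
  rw [hmain] at h
  convert! h using 7
  ring_nf
end
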